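/- arXiv:1305.2618 — 4 statements merged into one kernel-verified Lean document; each statement's English description precedes it below -/
import Mathlib

section
/- Let Y be a closed subspace of C₀(ℝⁿ) consisting entirely of Fourier transforms of L¹(ℝⁿ) functions. Then there are positive constants α and C such that every F ∈ Y satisfies ‖F‖_∞ ≤ C · sup{|F(ξ)| : |ξ| ≤ α}. -/
open MeasureTheory ZeroAtInfty RealInnerProductSpace

/-- The Fourier transform of `f : ℝⁿ → ℂ`, `𝓕f(ξ) = ∫ e^{-i⟨x,ξ⟩} f(x) dx`. -/
noncomputable def fourierTransf {n : ℕ} (f : EuclideanSpace ℝ (Fin n) → ℂ)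
    (ξ : EuclideanSpace ℝ (Fin n)) : ℂ :=
  ∫ x : EuclideanSpace ℝ (Fin n), Complex.exp (-(Complex.I * (⟪x, ξ⟫ : ℝ))) * f x

/-!
If no compact set controls the norm on `Y`, a gliding hump argument produces, for every `N`,
functions `F₁, …, F_N ∈ Y` of norm one with essentially disjoint humps, so that all signed sums
`±F₁ ± ⋯ ± F_N` have norm at most `2`. By the open mapping theorem the inverse Fourier transform is
bounded on `Y`, hence the signed sums of the preimages `f₁, …, f_N` are bounded in `L¹` uniformly
in `N`, while the norms of the `fᵢ` are bounded below. But `L¹` has cotype `2`: by Khintchine's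
inequality some signed sum has `L¹`-norm at least of order `√N`.
-/

section RandomSigns

open Finset
open scoped BigOperators

variable {ι : Type*} [Fintype ι]

theorem norm_prod_one_add_le_exp (c : ι → ℂ) (hc : ∀ i, (c i).re = 0) :
    ‖∏ i, (1 + c i)‖ ≤ Real.exp ((∑ i, ‖c i‖ ^ 2) / 2) := by
  rw [norm_prod, sum_div, Real.exp_sum]
  refine prod_le_prod (fun i _ ↦ norm_nonneg _) fun i _ ↦ ?_
  have norm_sq_eq : ‖1 + c i‖ ^ 2 = ‖c i‖ ^ 2 + 1 := by
    simp [Complex.sq_norm, Complex.normSq_apply, hc i, add_comm]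
  refine le_of_sq_le_sq ?_ (Real.exp_nonneg _)
  rw [norm_sq_eq, ← Real.exp_nat_mul, Nat.cast_ofNat, mul_div_cancel₀ _ two_ne_zero]
  exact Real.add_one_le_exp _

variable [DecidableEq ι]

theorem expect_prod_apply {κ R : Type*} [Fintype κ] [Semifield R] [CharZero R]
    (f : ι → κ → R) : 𝔼 x : ι → κ, ∏ i, f i (x i) = ∏ i, 𝔼 k, f i k := by
  simp only [Fintype.expect_eq_sum_div_card, prod_div_distrib, Fintype.prod_sum, prod_const,
    card_univ, Fintype.card_fun, Nat.cast_pow]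

theorem expect_units_mul_prod_one_add {R : Type*} [Field R] [CharZero R] (c : ι → R) (k : ι) :
    𝔼 ε : ι → ℤˣ, (ε k : R) * ∏ i, (1 + ε i * c i) = c k := by
  have expect_factor (i : ι) :
      𝔼 e : ℤˣ, (if i = k then (e : R) else 1) * (1 + e * c i) = if i = k then c i else 1 := by
    rw [Fintype.expect_eq_sum_div_card, UnitsInt.univ, sum_pair (by decide), Fintype.card_units_int]
    simp only [Units.val_one, Units.val_neg, Int.cast_one, Int.cast_neg, Nat.cast_ofNat]
    split_ifs <;> ring
  calc 𝔼 ε : ι → ℤˣ, (ε k : R) * ∏ i, (1 + ε i * c i)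
      = 𝔼 ε : ι → ℤˣ, ∏ i, (if i = k then (ε i : R) else 1) * (1 + ε i * c i) := by
        simp only [prod_mul_distrib, prod_ite_eq', mem_univ, if_true]
    _ = ∏ i, if i = k then c i else 1 := by
        rw [expect_prod_apply fun i (e : ℤˣ) ↦ (if i = k then (e : R) else 1) * (1 + e * c i)]
        exact prod_congr rfl fun i _ ↦ expect_factor i
    _ = c k := by simp only [prod_ite_eq', mem_univ, if_true]

-- The average over the signs is tested against the Riesz product `∏ᵢ (1 + εᵢ cᵢ)`; since the `cᵢ`
-- are purely imaginary, its modulus exceeds `1` only to second order in `c`.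
theorem norm_sum_mul_le_exp_mul_expect (c a : ι → ℂ) (hc : ∀ i, (c i).re = 0) :
    ‖∑ i, c i * a i‖ ≤
      Real.exp ((∑ i, ‖c i‖ ^ 2) / 2) * 𝔼 ε : ι → ℤˣ, ‖∑ i, ε i • a i‖ := by
  have norm_riesz_le (ε : ι → ℤˣ) :
      ‖∏ i, (1 + ε i * c i)‖ ≤ Real.exp ((∑ i, ‖c i‖ ^ 2) / 2) := by
    have norm_sign_mul (i : ι) : ‖(ε i : ℂ) * c i‖ = ‖c i‖ := by
      rcases Int.units_eq_one_or (ε i) with h | h <;> simp [h]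
    simpa only [norm_sign_mul] using norm_prod_one_add_le_exp (fun i ↦ ε i * c i) (by simp [hc])
  calc ‖∑ i, c i * a i‖
      = ‖𝔼 ε : ι → ℤˣ, (∏ i, (1 + ε i * c i)) * ∑ k, ε k • a k‖ := by
        simp_rw [mul_sum, expect_sum_comm, Units.smul_def, zsmul_eq_mul, ← mul_assoc,
          mul_comm _ ((_ : ℤ) : ℂ), ← expect_mul, expect_units_mul_prod_one_add]
    _ ≤ 𝔼 ε : ι → ℤˣ, ‖(∏ i, (1 + ε i * c i)) * ∑ k, ε k • a k‖ :=
        RCLike.norm_expect_le (K := ℂ)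
    _ ≤ 𝔼 ε : ι → ℤˣ, Real.exp ((∑ i, ‖c i‖ ^ 2) / 2) * ‖∑ i, ε i • a i‖ :=
        expect_le_expect fun ε _ ↦ by
          rw [norm_mul]
          exact mul_le_mul_of_nonneg_right (norm_riesz_le ε) (norm_nonneg _)
    _ = _ := (mul_expect _ _ _).symm

theorem sum_abs_re_le_expect (a : ι → ℂ) :
    ∑ i, |(a i).re| ≤
      Real.exp (1 / 2) * √(Fintype.card ι) * 𝔼 ε : ι → ℤˣ, ‖∑ i, ε i • a i‖ := by
  rcases isEmpty_or_nonempty ι with _ | _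
  · simp
  have sqrt_pos : 0 < √(Fintype.card ι : ℝ) := Real.sqrt_pos.2 (by exact_mod_cast Fintype.card_pos)
  set s : ι → ℝ := fun i ↦ (SignType.sign (a i).re : ℝ) with s_def
  set c : ι → ℂ := fun i ↦ (s i / √(Fintype.card ι) : ℝ) * Complex.I with c_def
  have sum_norm_sq_le : ∑ i, ‖c i‖ ^ 2 ≤ 1 := by
    have norm_sq_le (i : ι) : ‖c i‖ ^ 2 ≤ 1 / Fintype.card ι := by
      have : s i ^ 2 ≤ 1 := by
        simp only [s_def]
        rcases SignType.sign (a i).re with _ | _ | _ <;> simp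
      simp only [c_def, norm_mul, Complex.norm_real, Complex.norm_I, mul_one, Real.norm_eq_abs,
        sq_abs, div_pow, Nat.cast_nonneg, Real.sq_sqrt]
      gcongr
    calc ∑ i, ‖c i‖ ^ 2 ≤ ∑ _i : ι, 1 / (Fintype.card ι : ℝ) := sum_le_sum fun i _ ↦ norm_sq_le i
      _ = 1 := by simp
  have sum_abs_le : ∑ i, |(a i).re| ≤ √(Fintype.card ι) * ‖∑ i, c i * a i‖ := by
    have im_eq (i : ι) : (c i * a i).im = |(a i).re| / √(Fintype.card ι) := by
      simp [c_def, s_def, div_mul_eq_mul_div]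
    rw [← div_le_iff₀' sqrt_pos, sum_div, ← sum_congr rfl fun i _ ↦ im_eq i, ← Complex.im_sum]
    exact Complex.im_le_norm _
  calc ∑ i, |(a i).re| ≤ √(Fintype.card ι) * ‖∑ i, c i * a i‖ := sum_abs_le
    _ ≤ √(Fintype.card ι) * (Real.exp ((∑ i, ‖c i‖ ^ 2) / 2) *
          𝔼 ε : ι → ℤˣ, ‖∑ i, ε i • a i‖) := by
        gcongr
        exact norm_sum_mul_le_exp_mul_expect c a fun i ↦ by simp [c_def]
    _ ≤ √(Fintype.card ι) * (Real.exp (1 / 2) * 𝔼 ε : ι → ℤˣ, ‖∑ i, ε i • a i‖) := by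
        gcongr
    _ = _ := by ring

theorem sum_norm_le_expect (a : ι → ℂ) :
    ∑ i, ‖a i‖ ≤
      2 * Real.exp (1 / 2) * √(Fintype.card ι) * 𝔼 ε : ι → ℤˣ, ‖∑ i, ε i • a i‖ := by
  have sum_abs_im_le : ∑ i, |(a i).im| ≤
      Real.exp (1 / 2) * √(Fintype.card ι) * 𝔼 ε : ι → ℤˣ, ‖∑ i, ε i • a i‖ := by
    simpa [Units.smul_def, mul_left_comm _ Complex.I, ← mul_sum] using
      sum_abs_re_le_expect fun i ↦ Complex.I * a i
  calc ∑ i, ‖a i‖ ≤ ∑ i, (|(a i).re| + |(a i).im|) :=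
        sum_le_sum fun i _ ↦ Complex.norm_le_abs_re_add_abs_im _
    _ ≤ _ := by
        rw [sum_add_distrib]
        linarith [sum_abs_re_le_expect a]

theorem sum_norm_L1_le_expect {α : Type*} [MeasurableSpace α] {μ : Measure α} (f : ι → Lp ℂ 1 μ) :
    ∑ i, ‖f i‖ ≤
      2 * Real.exp (1 / 2) * √(Fintype.card ι) * 𝔼 ε : ι → ℤˣ, ‖∑ i, ε i • f i‖ := by
  have coeFn_signed_sum (ε : ι → ℤˣ) : ⇑(∑ i, ε i • f i) =ᵐ[μ] fun x ↦ ∑ i, ε i • f i x := by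
    have coeFn_signed (i : ι) : ⇑(ε i • f i) =ᵐ[μ] fun x ↦ ε i • f i x := by
      rcases Int.units_eq_one_or (ε i) with h | h
      · simp [h]
      · filter_upwards [Lp.coeFn_neg (f i)] with x hx
        simp only [h, Units.neg_smul, one_smul, hx, Pi.neg_apply]
    filter_upwards [Lp.coeFn_fun_finsetSum univ fun i ↦ ε i • f i,
      ae_all_iff.2 coeFn_signed] with x hsum hsigned
    simp only [hsum, hsigned]
  have integrable_signed_sum (ε : ι → ℤˣ) : Integrable (fun x ↦ ‖∑ i, ε i • f i x‖) μ :=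
    ((L1.integrable_coeFn _).congr (coeFn_signed_sum ε)).norm
  have integral_signed_sum (ε : ι → ℤˣ) : ∫ x, ‖∑ i, ε i • f i x‖ ∂μ = ‖∑ i, ε i • f i‖ := by
    rw [L1.norm_eq_integral_norm]
    exact integral_congr_ae ((coeFn_signed_sum ε).fun_comp norm).symm
  calc ∑ i, ‖f i‖ = ∫ x, ∑ i, ‖f i x‖ ∂μ := by
        simp only [L1.norm_eq_integral_norm]
        exact (integral_finsetSum _ fun i _ ↦ (L1.integrable_coeFn _).norm).symm
    _ ≤ ∫ x, 2 * Real.exp (1 / 2) * √(Fintype.card ι) * 𝔼 ε : ι → ℤˣ, ‖∑ i, ε i • f i x‖ ∂μ := by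
        refine integral_mono (integrable_finsetSum _ fun i _ ↦ (L1.integrable_coeFn _).norm) ?_
          fun x ↦ sum_norm_le_expect fun i ↦ f i x
        simp only [Fintype.expect_eq_sum_div_card]
        exact ((integrable_finsetSum _ fun ε _ ↦ integrable_signed_sum ε).div_const _).const_mul _
    _ = _ := by
        simp only [Fintype.expect_eq_sum_div_card]
        rw [integral_const_mul, integral_div,
          integral_finsetSum _ fun ε _ ↦ integrable_signed_sum ε]
        simp only [integral_signed_sum]

omit [DecidableEq ι] in
theorem sqrt_card_mul_le_of_norm_signed_sum_le {α : Type*} [MeasurableSpace α] {μ : Measure α}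
    {f : ι → Lp ℂ 1 μ} {δ M : ℝ} (hδ : ∀ i, δ ≤ ‖f i‖)
    (hM : ∀ ε : ι → ℤˣ, ‖∑ i, ε i • f i‖ ≤ M) :
    √(Fintype.card ι) * δ ≤ 2 * Real.exp (1 / 2) * M := by
  classical
  rcases isEmpty_or_nonempty ι with _ | _
  · simpa [Real.exp_pos] using hM 1
  have sqrt_pos : 0 < √(Fintype.card ι : ℝ) := Real.sqrt_pos.2 (by exact_mod_cast Fintype.card_pos)
  refine le_of_mul_le_mul_left ?_ sqrt_pos
  calc √(Fintype.card ι) * (√(Fintype.card ι) * δ) = ∑ _i : ι, δ := by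
        rw [← mul_assoc, Real.mul_self_sqrt (Nat.cast_nonneg _), sum_const, card_univ,
          nsmul_eq_mul]
    _ ≤ ∑ i, ‖f i‖ := sum_le_sum fun i _ ↦ hδ i
    _ ≤ 2 * Real.exp (1 / 2) * √(Fintype.card ι) * 𝔼 ε : ι → ℤˣ, ‖∑ i, ε i • f i‖ :=
        sum_norm_L1_le_expect f
    _ ≤ 2 * Real.exp (1 / 2) * √(Fintype.card ι) * M := by
        gcongr
        exact expect_le univ_nonempty fun ε _ ↦ hM ε
    _ = √(Fintype.card ι) * (2 * Real.exp (1 / 2) * M) := by ring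

end RandomSigns

section GlidingHump

open Filter Set Topology

variable {X E : Type*} [TopologicalSpace X] [NormedAddCommGroup E]

theorem norm_apply_le_norm (F : C₀(X, E)) (x : X) : ‖F x‖ ≤ ‖F‖ :=
  F.toBCF.norm_coe_le_norm x

theorem norm_sum_le_of_forall_sum_norm_apply_le {ι : Type*} [Fintype ι] {F : ι → C₀(X, E)} {M : ℝ}
    (hM : 0 ≤ M) (h : ∀ x, ∑ i, ‖F i x‖ ≤ M) : ‖∑ i, F i‖ ≤ M := by
  rw [← ZeroAtInftyContinuousMap.norm_toBCF_eq_norm, BoundedContinuousFunction.norm_le hM]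
  intro x
  let eval : C₀(X, E) →+ E := ⟨⟨fun F ↦ F x, rfl⟩, fun _ _ ↦ rfl⟩
  calc ‖eval (∑ i, F i)‖ = ‖∑ i, F i x‖ := by rw [map_sum]; rfl
    _ ≤ ∑ i, ‖F i x‖ := norm_sum_le _ _
    _ ≤ M := h x

theorem exists_isCompact_forall_notMem_sum_norm_lt {ι : Type*} [Fintype ι] (F : ι → C₀(X, E))
    {ε : ℝ} (hε : 0 < ε) : ∃ K : Set X, IsCompact K ∧ ∀ x ∉ K, ∑ i, ‖F i x‖ < ε := by
  have sum_tendsto : Tendsto (fun x ↦ ∑ i, ‖F i x‖) (cocompact X) (𝓝 0) := by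
    simpa using tendsto_finsetSum Finset.univ fun i _ ↦ (zero_at_infty (F i)).norm
  obtain ⟨K, hK, hKε⟩ := mem_cocompact.1 (sum_tendsto.eventually_lt_const hε)
  exact ⟨K, hK, fun x hx ↦ hKε hx⟩

theorem exists_fin_sum_norm_apply_le {S : Set C₀(X, E)} {ε : ℝ} (hε : 0 < ε)
    (hS : ∀ F ∈ S, ‖F‖ ≤ 1)
    (small : ∀ K : Set X, IsCompact K → ∃ F ∈ S, ∀ x ∈ K, ‖F x‖ ≤ ε) (N : ℕ) :
    ∃ F : Fin N → C₀(X, E), (∀ i, F i ∈ S) ∧ ∀ x, ∑ i, ‖F i x‖ ≤ 1 + N * ε := by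
  induction N with
  | zero => exact ⟨Fin.elim0, fun i ↦ i.elim0, fun x ↦ by simp⟩
  | succ N ih =>
    obtain ⟨F, hFS, hF⟩ := ih
    obtain ⟨K, hK, hKε⟩ := exists_isCompact_forall_notMem_sum_norm_lt F hε
    obtain ⟨G, hGS, hG⟩ := small K hK
    refine ⟨Fin.cons G F, Fin.cases hGS hFS, fun x ↦ ?_⟩
    simp only [Fin.sum_univ_succ, Fin.cons_zero, Fin.cons_succ, Nat.cast_add_one]
    by_cases hx : x ∈ K
    · linarith [hG x hx, hF x]
    · have : 0 ≤ N * ε := by positivity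
      linarith [hKε x hx, (norm_apply_le_norm G x).trans (hS G hGS)]

end GlidingHump

section Embedding

variable {X : Type*} [TopologicalSpace X] {α : Type*} [MeasurableSpace α] {μ : Measure α}

theorem exists_norm_le_mul_norm_of_le_range {𝕜 E F : Type*} [NontriviallyNormedField 𝕜]
    [NormedAddCommGroup E] [NormedSpace 𝕜 E] [CompleteSpace E] [NormedAddCommGroup F]
    [NormedSpace 𝕜 F] [CompleteSpace F] (Φ : E →L[𝕜] F) (hΦ : Function.Injective Φ)
    {Y : Submodule 𝕜 F} (hclosed : IsClosed (Y : Set F)) (hY : Y ≤ Φ.range) :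
    ∃ c : ℝ, 0 ≤ c ∧ ∀ f, Φ f ∈ Y → ‖f‖ ≤ c * ‖Φ f‖ := by
  let W : Submodule 𝕜 E := Y.comap Φ.toLinearMap
  have : CompleteSpace W := (hclosed.preimage Φ.continuous).completeSpace_coe
  have range_eq : Set.range (Φ ∘L W.subtypeL) = Y := by
    ext F
    refine ⟨?_, fun hF ↦ ?_⟩
    · rintro ⟨f, rfl⟩
      exact f.2
    · obtain ⟨f, rfl⟩ := hY hF
      exact ⟨⟨f, hF⟩, rfl⟩
  obtain ⟨c, hc⟩ := (Φ ∘L W.subtypeL).antilipschitz_of_injective_of_isClosed_range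
    (hΦ.comp Subtype.val_injective) (range_eq ▸ hclosed)
  exact ⟨c, c.2, fun f hf ↦ by simpa using hc.le_mul_dist ⟨f, hf⟩ 0⟩

theorem sqrt_card_le_of_sum_norm_apply_le {ι : Type*} [Fintype ι] (Φ : Lp ℂ 1 μ →L[ℂ] C₀(X, ℂ))
    {Y : Submodule ℂ C₀(X, ℂ)} (hY : Y ≤ Φ.range) {c M : ℝ} (hc : 0 ≤ c) (hM : 0 ≤ M)
    (hbound : ∀ f, Φ f ∈ Y → ‖f‖ ≤ c * ‖Φ f‖) {F : ι → C₀(X, ℂ)} (hF : ∀ i, F i ∈ Y)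
    (hnorm : ∀ i, ‖F i‖ = 1) (hsum : ∀ x, ∑ i, ‖F i x‖ ≤ M) :
    √(Fintype.card ι) ≤ 2 * Real.exp (1 / 2) * (c * M) * ‖Φ‖ := by
  classical
  choose f hf using fun i ↦ hY (hF i)
  replace hf (i : ι) : Φ (f i) = F i := hf i
  rcases isEmpty_or_nonempty ι with _ | ⟨⟨i₀⟩⟩
  · simp only [Fintype.card_eq_zero, Nat.cast_zero, Real.sqrt_zero]
    positivity
  have one_le (i : ι) : 1 ≤ ‖Φ‖ * ‖f i‖ := by
    simpa only [hf, hnorm] using Φ.le_opNorm (f i)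
  have opNorm_pos : 0 < ‖Φ‖ := pos_of_mul_pos_left (one_pos.trans_le (one_le i₀)) (norm_nonneg _)
  have map_signed_sum (ε : ι → ℤˣ) : Φ (∑ i, ε i • f i) = ∑ i, ε i • F i := by
    simp only [Units.smul_def, map_sum, map_zsmul, hf]
  have norm_signed_sum_le (ε : ι → ℤˣ) : ‖∑ i, ε i • f i‖ ≤ c * M := by
    have norm_signed_apply (i : ι) (x : X) : ‖(ε i • F i) x‖ = ‖F i x‖ := by
      rcases Int.units_eq_one_or (ε i) with h | h <;> simp [h, Units.neg_smul]
    have mem_Y : ∑ i, ε i • F i ∈ Y := Y.sum_mem fun i _ ↦ Y.toAddSubgroup.zsmul_mem (hF i) _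
    calc ‖∑ i, ε i • f i‖ ≤ c * ‖∑ i, ε i • F i‖ := by
          rw [← map_signed_sum] at mem_Y ⊢
          exact hbound _ mem_Y
      _ ≤ c * M := by
          gcongr
          exact norm_sum_le_of_forall_sum_norm_apply_le hM fun x ↦ by
            simpa only [norm_signed_apply] using hsum x
  rw [← div_le_iff₀ opNorm_pos, div_eq_mul_inv]
  exact sqrt_card_mul_le_of_norm_signed_sum_le
    (fun i ↦ (inv_le_iff_one_le_mul₀' opNorm_pos).2 (one_le i)) norm_signed_sum_le

theorem exists_mem_norm_eq_one_norm_apply_le {Y : Submodule ℂ C₀(X, ℂ)} {F : C₀(X, ℂ)}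
    (hF : F ∈ Y) (hF0 : F ≠ 0) {K : Set X} {C : ℝ} (hC : 0 < C)
    (hK : ∀ x ∈ K, C * ‖F x‖ ≤ ‖F‖) : ∃ G ∈ Y, ‖G‖ = 1 ∧ ∀ x ∈ K, ‖G x‖ ≤ 1 / C := by
  refine ⟨(‖F‖⁻¹ : ℂ) • F, Y.smul_mem _ hF, norm_smul_inv_norm hF0, fun x hx ↦ ?_⟩
  have norm_pos : 0 < ‖F‖ := norm_pos_iff.2 hF0
  rw [ZeroAtInftyContinuousMap.smul_apply, norm_smul, norm_inv, Complex.norm_real, norm_norm,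
    inv_mul_le_iff₀ norm_pos, mul_one_div, le_div_iff₀' hC]
  exact hK x hx

theorem exists_isCompact_norm_le_mul_norm_apply (Φ : Lp ℂ 1 μ →L[ℂ] C₀(X, ℂ))
    (hΦ : Function.Injective Φ) {Y : Submodule ℂ C₀(X, ℂ)}
    (hclosed : IsClosed (Y : Set C₀(X, ℂ))) (hY : Y ≤ Φ.range) :
    ∃ K : Set X, IsCompact K ∧ ∃ C > 0, ∀ F ∈ Y, F ≠ 0 → ∃ x ∈ K, ‖F‖ ≤ C * ‖F x‖ := by
  obtain ⟨c, hc, hbound⟩ := exists_norm_le_mul_norm_of_le_range Φ hΦ hclosed hY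
  obtain ⟨N, hN⟩ := exists_nat_gt ((2 * Real.exp (1 / 2) * (c * 2) * ‖Φ‖) ^ 2)
  have N_pos : (0 : ℝ) < N := (sq_nonneg _).trans_lt hN
  by_contra! not_controlled
  have small (K : Set X) (hK : IsCompact K) :
      ∃ F ∈ {F ∈ (Y : Set C₀(X, ℂ)) | ‖F‖ = 1}, ∀ x ∈ K, ‖F x‖ ≤ 1 / N := by
    obtain ⟨F, hFY, hF0, hFK⟩ := not_controlled K hK N N_pos
    obtain ⟨G, hGY, hG, hGK⟩ :=
      exists_mem_norm_eq_one_norm_apply_le hFY hF0 N_pos fun x hx ↦ (hFK x hx).le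
    exact ⟨G, ⟨hGY, hG⟩, hGK⟩
  obtain ⟨F, hF, hsum⟩ :=
    exists_fin_sum_norm_apply_le (one_div_pos.2 N_pos) (fun F hF ↦ hF.2.le) small N
  have sqrt_le : √N ≤ 2 * Real.exp (1 / 2) * (c * 2) * ‖Φ‖ := by
    simpa only [Fintype.card_fin] using sqrt_card_le_of_sum_norm_apply_le Φ hY hc two_pos.le hbound
      (fun i ↦ (hF i).1) (fun i ↦ (hF i).2) fun x ↦ (hsum x).trans_eq (by field)
  exact hN.not_ge (Real.sqrt_le_left (by positivity) |>.1 sqrt_le)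

end Embedding

section Fourier

open FourierTransform Filter Topology

theorem eq_zero_of_fourier_eq_zero {V F : Type*} [NormedAddCommGroup V] [InnerProductSpace ℝ V]
    [FiniteDimensional ℝ V] [MeasurableSpace V] [BorelSpace V] [NormedAddCommGroup F]
    [NormedSpace ℂ F] [CompleteSpace F] (f : Lp F 1 (volume : Measure V)) (hf : 𝓕 (f : V → F) = 0) :
    f = 0 := by
  refine LinearMap.ker_eq_bot'.1
    (Lp.ker_toTemperedDistributionCLM_eq_bot (F := F) (μ := (volume : Measure V)) (p := 1)) f ?_
  ext g
  calc Lp.toTemperedDistribution f g = ∫ x, 𝓕 (𝓕⁻ g : SchwartzMap V ℂ) x • f x := by simp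
    _ = ∫ ξ, (𝓕⁻ g : SchwartzMap V ℂ) ξ • 𝓕 (f : V → F) ξ := by
      rw [SchwartzMap.fourier_coe]
      simpa using! VectorFourier.integral_fourierIntegral_smul_eq_flip (L := innerₗ V)
        Real.continuous_fourierChar continuous_inner (SchwartzMap.integrable (μ := volume) (𝓕⁻ g))
        (L1.integrable_coeFn f)
    _ = 0 := by simp [hf]

variable {n : ℕ}

theorem fourierTransf_eq_fourier (f : EuclideanSpace ℝ (Fin n) → ℂ) (ξ : EuclideanSpace ℝ (Fin n)) :
    fourierTransf f ξ = 𝓕 f ((2 * Real.pi)⁻¹ • ξ) := by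
  rw [Real.fourier_eq', fourierTransf]
  congr 1 with x
  rw [smul_eq_mul, inner_smul_right]
  congr 2
  push_cast
  field

theorem fourierTransf_congr_ae {f g : EuclideanSpace ℝ (Fin n) → ℂ} (h : f =ᵐ[volume] g) :
    fourierTransf f = fourierTransf g := by
  ext ξ
  exact integral_congr_ae (h.mono fun x hx ↦ by simp only [hx])

theorem norm_fourierTransf_le (f : EuclideanSpace ℝ (Fin n) → ℂ) (ξ : EuclideanSpace ℝ (Fin n)) :
    ‖fourierTransf f ξ‖ ≤ ∫ x, ‖f x‖ := by
  rw [fourierTransf_eq_fourier]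
  exact VectorFourier.norm_fourierIntegral_le_integral_norm _ _ _ _ _

theorem continuous_fourierTransf {f : EuclideanSpace ℝ (Fin n) → ℂ} (hf : Integrable f) :
    Continuous (fourierTransf f) := by
  have fourier_continuous : Continuous (𝓕 f) :=
    VectorFourier.fourierIntegral_continuous Real.continuous_fourierChar
      (L := innerₗ _) continuous_inner hf
  rw [funext (fourierTransf_eq_fourier f)]
  fun_prop

theorem tendsto_fourierTransf_cocompact (f : EuclideanSpace ℝ (Fin n) → ℂ) :
    Tendsto (fourierTransf f) (cocompact _) (𝓝 0) := by
  rw [funext (fourierTransf_eq_fourier f)]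
  have pi_ne : (2 * Real.pi)⁻¹ ≠ 0 := by positivity
  exact (tendsto_integral_exp_inner_smul_cocompact f).comp
    (Homeomorph.smulOfNeZero _ pi_ne).isClosedEmbedding.tendsto_cocompact

theorem fourierTransf_add {f g : EuclideanSpace ℝ (Fin n) → ℂ} (hf : Integrable f)
    (hg : Integrable g) : fourierTransf (f + g) = fourierTransf f + fourierTransf g := by
  ext ξ
  simp only [fourierTransf_eq_fourier, Pi.add_apply]
  exact congr_fun (VectorFourier.fourierIntegral_add Real.continuous_fourierChar
    (L := innerₗ _) continuous_inner hf hg) _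

theorem fourierTransf_smul (c : ℂ) (f : EuclideanSpace ℝ (Fin n) → ℂ) :
    fourierTransf (c • f) = c • fourierTransf f := by
  ext ξ
  simp only [fourierTransf_eq_fourier, Pi.smul_apply]
  exact congr_fun (VectorFourier.fourierIntegral_const_smul _ _ _ f c) _

/-- The Fourier transform `f ↦ fourierTransf f` as a bounded operator `L¹(ℝⁿ) → C₀(ℝⁿ)`. -/
noncomputable def fourierL1 (n : ℕ) :
    Lp ℂ 1 (volume : Measure (EuclideanSpace ℝ (Fin n))) →L[ℂ] C₀(EuclideanSpace ℝ (Fin n), ℂ) :=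
  LinearMap.mkContinuous
    { toFun f := ⟨⟨fourierTransf f, continuous_fourierTransf (L1.integrable_coeFn f)⟩,
        tendsto_fourierTransf_cocompact f⟩
      map_add' f g := DFunLike.coe_injective <|
        (fourierTransf_congr_ae (Lp.coeFn_add f g)).trans <|
          fourierTransf_add (L1.integrable_coeFn f) (L1.integrable_coeFn g)
      map_smul' c f := DFunLike.coe_injective <|
        (fourierTransf_congr_ae (Lp.coeFn_smul c f)).trans <| fourierTransf_smul c f }
    1 fun f ↦ by
      rw [one_mul, L1.norm_eq_integral_norm, ← ZeroAtInftyContinuousMap.norm_toBCF_eq_norm,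
        BoundedContinuousFunction.norm_le (by positivity)]
      exact norm_fourierTransf_le f

theorem fourierL1_apply (f : Lp ℂ 1 (volume : Measure (EuclideanSpace ℝ (Fin n))))
    (ξ : EuclideanSpace ℝ (Fin n)) : fourierL1 n f ξ = fourierTransf f ξ := rfl

theorem fourierL1_injective : Function.Injective (fourierL1 n) := by
  refine (injective_iff_map_eq_zero _).2 fun f hf ↦ eq_zero_of_fourier_eq_zero f ?_
  ext ξ
  have transf_eq_zero := DFunLike.congr_fun hf ((2 * Real.pi) • ξ)
  rwa [fourierL1_apply, fourierTransf_eq_fourier, inv_smul_smul₀ (by positivity)]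
    at transf_eq_zero

end Fourier

/-- If `Y` is a closed subspace of `C₀(ℝⁿ)` consisting of absolutely
convergent Fourier transforms, then the sup norm on `Y` is controlled by the
sup over a fixed ball. -/
theorem norm_le_ball_sup_of_fourier_range {n : ℕ}
    (Y : Subspace ℂ C₀(EuclideanSpace ℝ (Fin n), ℂ))
    (hclosed : IsClosed (Y : Set C₀(EuclideanSpace ℝ (Fin n), ℂ)))
    (hsub : ∀ F ∈ Y, ∃ f : EuclideanSpace ℝ (Fin n) → ℂ,
      Integrable f ∧ ∀ ξ, F ξ = fourierTransf f ξ) :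
    ∃ α > (0 : ℝ), ∃ C > (0 : ℝ), ∀ F ∈ Y,
      ‖F‖ ≤ C * ⨆ ξ : Metric.closedBall (0 : EuclideanSpace ℝ (Fin n)) α, ‖F ↑ξ‖ := by
  have le_range : Y ≤ (fourierL1 n).range := fun F hF ↦ by
    obtain ⟨f, hf, hFf⟩ := hsub F hF
    refine ⟨hf.toL1 f, DFunLike.ext _ _ fun ξ ↦ ?_⟩
    exact (congr_fun (fourierTransf_congr_ae hf.coeFn_toL1) ξ).trans (hFf ξ).symm
  obtain ⟨K, hK, C, hC, hKC⟩ :=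
    exists_isCompact_norm_le_mul_norm_apply (fourierL1 n) fourierL1_injective hclosed le_range
  obtain ⟨α, hα, hKα⟩ := hK.isBounded.subset_closedBall_lt 0 0
  refine ⟨α, hα, C, hC, fun F hF ↦ ?_⟩
  rcases eq_or_ne F 0 with rfl | hF0
  · simp
  obtain ⟨ξ, hξ, hle⟩ := hKC F hF hF0
  have bddAbove : BddAbove (Set.range fun η : Metric.closedBall (0 : EuclideanSpace ℝ (Fin n)) α ↦
      ‖F η‖) :=
    ⟨‖F‖, Set.forall_mem_range.2 fun η ↦ norm_apply_le_norm F η.1⟩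
  calc ‖F‖ ≤ C * ‖F ξ‖ := hle
    _ ≤ C * ⨆ η : Metric.closedBall (0 : EuclideanSpace ℝ (Fin n)) α, ‖F η‖ := by
      gcongr
      exact le_ciSup bddAbove ⟨ξ, hKα hξ⟩
end

section
/- Let X be a subspace of L¹(μ) (μ a measure on a measurable space) and suppose there is a countable measurable partition (E_m) of the space and a constant C > 0 such that C‖f‖_{L¹} ≤ Σ_m |∫_{E_m} f dμ| for all f ∈ X. Then the map T : X → ℓ¹ given by (Tf)(m) = ∫_{E_m} f dμ is an isomorphism of X onto a subspace of ℓ¹; consequently, if X is also closed and infinite dimensional then X is not reflexive. -/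
open MeasureTheory NormedSpace

/-- A Banach space is reflexive if the canonical embedding into its bidual is
surjective. -/
def IsReflexiveSpace (W : Type*) [NormedAddCommGroup W] [NormedSpace ℂ W] : Prop :=
  Function.Surjective (inclusionInDoubleDual ℂ W)

/-! Since `Σ_m |∫_{E_m} f| ≤ ‖f‖`, the map `f ↦ (∫_{E_m} f)_m` is a contraction into `ℓ¹`, and the
hypothesis says that it is bounded below on `X`. It remains to see that an infinite-dimensional
space `W` embedded in `ℓ¹` is not reflexive. By infinite dimensionality there is a gliding hump:
unit vectors `u n` of the image and disjoint finite blocks `B n` such that `u n` vanishes on all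
earlier blocks and carries more than `3/4` of its mass on its own. If `W` were reflexive, the
`u n` would have a weak cluster point `v`, which vanishes on every block. A bounded sequence
supported on the blocks and matching the phases of `u n` on `B n` then defines a functional that
kills `v` although its real part is at least `1/2` at each `u n`. -/

open Filter Topology
open scoped ENNReal lp

section WeakCompactness

variable {𝕜 W : Type*} [NontriviallyNormedField 𝕜] [ProperSpace 𝕜]
  [SeminormedAddCommGroup W] [NormedSpace 𝕜 W]

theorem exists_forall_dual_tendsto_of_surjective_inclusionInDoubleDual
    (hW : Function.Surjective (inclusionInDoubleDual 𝕜 W)) {α : Type*} (l : Ultrafilter α)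
    {w : α → W} {R : ℝ} (hw : ∀ a, ‖w a‖ ≤ R) :
    ∃ v : W, ∀ ψ : StrongDual 𝕜 W, Tendsto (fun a ↦ ψ (w a)) l (𝓝 (ψ v)) := by
  let J : α → WeakDual 𝕜 (StrongDual 𝕜 W) :=
    fun a ↦ StrongDual.toWeakDual (inclusionInDoubleDual 𝕜 W (w a))
  have hJ (a : α) : J a ∈ WeakDual.toStrongDual ⁻¹'
      Metric.closedBall (0 : StrongDual 𝕜 (StrongDual 𝕜 W)) R :=
    (mem_closedBall_zero_iff (E := StrongDual 𝕜 (StrongDual 𝕜 W))).2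
      ((double_dual_bound 𝕜 W (w a)).trans (hw a))
  obtain ⟨Φ, -, hΦ⟩ := (WeakDual.isCompact_closedBall 0 R).ultrafilter_le_nhds' (l.map J)
    (mem_map.2 (Eventually.of_forall hJ))
  obtain ⟨v, hv⟩ := hW (WeakDual.toStrongDual Φ)
  refine ⟨v, fun ψ ↦ ?_⟩
  have hΦψ : Φ ψ = ψ v := (DFunLike.congr_fun hv ψ).symm
  exact hΦψ ▸ ((WeakDual.eval_continuous ψ).tendsto Φ).comp hΦ

end WeakCompactness

theorem hasSum_norm_of_lp_one {ι : Type*} {G : ι → Type*} [∀ i, NormedAddCommGroup (G i)]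
    (y : lp G 1) : HasSum (fun i ↦ ‖y i‖) ‖y‖ := by
  simpa using lp.hasSum_norm (p := 1) (by simp) y

section EllOne

variable {𝕜 ι : Type*} [RCLike 𝕜]

theorem exists_dual_forall_hasSum_mul {g : ι → 𝕜} (hg : Memℓp g ∞) :
    ∃ φ : StrongDual 𝕜 ℓ¹(ι, 𝕜), ∀ y : ℓ¹(ι, 𝕜), HasSum (fun i ↦ g i * y i) (φ y) := by
  refine ⟨lp.dualPairing ∞ 1 (fun _ ↦ ContinuousLinearMap.mul 𝕜 𝕜) (K := 1)
    (fun _ ↦ by simp) ⟨g, hg⟩, fun y ↦ ?_⟩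
  obtain ⟨M, hM⟩ := hg.bddAbove
  refine (Summable.of_norm_bounded ((hasSum_norm_of_lp_one y).summable.mul_left M)
    fun i ↦ ?_).hasSum
  rw [norm_mul]
  exact mul_le_mul_of_nonneg_right (hM ⟨i, rfl⟩) (norm_nonneg _)

theorem exists_norm_le_one_mul_eq_norm_on_blocks {κ : Type*} {B : κ → Set ι}
    (hB : Pairwise (Function.onFun Disjoint B)) (u : κ → ι → 𝕜) :
    ∃ g : ι → 𝕜, (∀ i, ‖g i‖ ≤ 1) ∧ (∀ k, ∀ i ∈ B k, g i * u k i = ‖u k i‖) ∧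
      ∀ i, (∀ k, i ∉ B k) → g i = 0 := by
  have hpoint (i : ι) : ∃ a : 𝕜, ‖a‖ ≤ 1 ∧ (∀ k, i ∈ B k → a * u k i = ‖u k i‖) ∧
      ((∀ k, i ∉ B k) → a = 0) := by
    by_cases hi : ∃ k, i ∈ B k
    · obtain ⟨k, hk⟩ := hi
      obtain ⟨a, ha, hau⟩ := RCLike.exists_norm_eq_mul_self (u k i)
      refine ⟨a, ha.le, fun j hj ↦ ?_, fun h ↦ absurd hk (h k)⟩
      rw [hB.eq (Set.not_disjoint_iff.2 ⟨i, hj, hk⟩), hau]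
    · exact ⟨0, by simp, fun k hk ↦ absurd ⟨k, hk⟩ hi, fun _ ↦ rfl⟩
  choose g hg_le hg_mul hg_zero using hpoint
  exact ⟨g, hg_le, fun k i ↦ hg_mul i k, hg_zero⟩

theorem exists_dual_two_mul_sum_norm_le_norm_add_re {κ : Type*} {B : κ → Finset ι}
    (hB : Pairwise (Function.onFun Disjoint B)) (u : κ → ℓ¹(ι, 𝕜)) :
    ∃ φ : StrongDual 𝕜 ℓ¹(ι, 𝕜),
      (∀ k, 2 * ∑ i ∈ B k, ‖u k i‖ ≤ ‖u k‖ + RCLike.re (φ (u k))) ∧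
      ∀ y : ℓ¹(ι, 𝕜), (∀ k, ∀ i ∈ B k, y i = 0) → φ y = 0 := by
  classical
  obtain ⟨g, hg_le, hg_mul, hg_zero⟩ :=
    exists_norm_le_one_mul_eq_norm_on_blocks (B := fun k ↦ (B k : Set ι))
      (hB.mono fun _ _ ↦ Finset.disjoint_coe.2) fun k i ↦ u k i
  obtain ⟨φ, hφ⟩ := exists_dual_forall_hasSum_mul
    (memℓp_infty ⟨1, Set.forall_mem_range.2 hg_le⟩ : Memℓp g ∞)
  refine ⟨φ, fun k ↦ ?_, fun y hy ↦ ?_⟩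
  · have hblock : HasSum (fun i ↦ if i ∈ B k then ‖u k i‖ else 0) (∑ i ∈ B k, ‖u k i‖) := by
      rw [Finset.sum_congr rfl fun i hi ↦ (if_pos hi).symm]
      exact hasSum_sum_of_ne_finset_zero fun i hi ↦ if_neg hi
    refine hasSum_le (fun i ↦ ?_) (hblock.mul_left 2)
      ((hasSum_norm_of_lp_one (u k)).add ((hφ (u k)).mapL RCLike.reCLM))
    split_ifs with hi
    · simp [hg_mul k i hi, two_mul]
    · have hre : -‖u k i‖ ≤ RCLike.re (g i * u k i) := calc
        -‖u k i‖ ≤ -‖g i * u k i‖ := by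
          rw [norm_mul]
          exact neg_le_neg (mul_le_of_le_one_left (norm_nonneg _) (hg_le i))
        _ ≤ RCLike.re (g i * u k i) := (abs_le.1 (RCLike.abs_re_le_norm _)).1
      simpa using neg_le_iff_add_nonneg'.1 hre
  · refine (hφ y).unique ?_
    convert hasSum_zero with i
    by_cases hi : ∃ k, i ∈ B k
    · obtain ⟨k, hk⟩ := hi
      rw [hy k i hk, mul_zero]
    · rw [hg_zero i (not_exists.1 hi), zero_mul]

end EllOne

theorem exists_ne_zero_forall_mem_apply_eq_zero {K V ι : Type*} {M : ι → Type*} [DivisionRing K]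
    [AddCommGroup V] [Module K V] [∀ i, AddCommGroup (M i)] [∀ i, Module K (M i)]
    [∀ i, FiniteDimensional K (M i)] (hV : ¬ FiniteDimensional K V) (φ : ∀ i, V →ₗ[K] M i)
    (s : Finset ι) :
    ∃ x ≠ 0, ∀ i ∈ s, φ i x = 0 := by
  have hker : LinearMap.ker (LinearMap.pi fun i : s ↦ φ i) ≠ ⊥ := fun h ↦
    hV (FiniteDimensional.of_injective _ (LinearMap.ker_eq_bot.1 h))
  obtain ⟨x, hx, hx0⟩ := (Submodule.ne_bot_iff _).1 hker
  exact ⟨x, hx0, fun i hi ↦ congr_fun (LinearMap.mem_ker.1 hx) ⟨i, hi⟩⟩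

section GlidingHump

variable {𝕜 ι W : Type*} [RCLike 𝕜]

theorem exists_hump_disjoint_of_injective [AddCommGroup W] [Module 𝕜 W]
    {T : W →ₗ[𝕜] ℓ¹(ι, 𝕜)} (hT : Function.Injective T)
    (hW : ¬ FiniteDimensional 𝕜 W) {r : ℝ} (hr : r < 1) (s : Finset ι) :
    ∃ (x : W) (t : Finset ι), ‖T x‖ = 1 ∧ r < ∑ i ∈ t, ‖T x i‖ ∧ Disjoint s t ∧
      ∀ i ∈ s, T x i = 0 := by
  classical
  obtain ⟨z, hz0, hz⟩ := exists_ne_zero_forall_mem_apply_eq_zero hW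
    (fun i ↦ lp.evalₗ (fun _ ↦ 𝕜) 1 i ∘ₗ T) s
  have hTz : T z ≠ 0 := (map_ne_zero_iff T hT).2 hz0
  let x : W := (‖T z‖⁻¹ : 𝕜) • z
  have hx_norm : ‖T x‖ = 1 := by
    rw [map_smul, norm_smul_inv_norm hTz]
  have hx_zero : ∀ i ∈ s, T x i = 0 := fun i hi ↦ by
    have : T z i = 0 := hz i hi
    simp [x, this]
  obtain ⟨t, ht⟩ := ((hasSum_norm_of_lp_one (T x)).eventually_const_lt (hx_norm ▸ hr)).exists
  refine ⟨x, t \ s, hx_norm, ?_, Finset.disjoint_sdiff, hx_zero⟩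
  rwa [Finset.sum_subset Finset.sdiff_subset fun i hit his ↦ ?_]
  rw [hx_zero i (by simpa [hit] using his), norm_zero]

theorem exists_glidingHump_of_injective [AddCommGroup W] [Module 𝕜 W]
    {T : W →ₗ[𝕜] ℓ¹(ι, 𝕜)} (hT : Function.Injective T)
    (hW : ¬ FiniteDimensional 𝕜 W) {r : ℝ} (hr : r < 1) :
    ∃ (x : ℕ → W) (B : ℕ → Finset ι), (∀ n, ‖T (x n)‖ = 1) ∧
      (∀ n, r < ∑ i ∈ B n, ‖T (x n) i‖) ∧ Pairwise (Function.onFun Disjoint B) ∧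
      ∀ m n, m < n → ∀ i ∈ B m, T (x n) i = 0 := by
  classical
  obtain ⟨f, hf, hfr⟩ := exists_seq_of_forall_finset_exists
    (fun p : W × Finset ι ↦ ‖T p.1‖ = 1 ∧ r < ∑ i ∈ p.2, ‖T p.1 i‖)
    (fun p q ↦ Disjoint p.2 q.2 ∧ ∀ i ∈ p.2, T q.1 i = 0) fun s _ ↦ by
      obtain ⟨x, t, hx, ht, hst, hzero⟩ :=
        exists_hump_disjoint_of_injective hT hW hr (s.biUnion Prod.snd)
      refine ⟨(x, t), ⟨hx, ht⟩, fun p hp ↦ ?_⟩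
      have hps : p.2 ⊆ s.biUnion Prod.snd := Finset.subset_biUnion_of_mem Prod.snd hp
      exact ⟨hst.mono_left hps, fun i hi ↦ hzero i (hps hi)⟩
  refine ⟨fun n ↦ (f n).1, fun n ↦ (f n).2, fun n ↦ (hf n).1, fun n ↦ (hf n).2, ?_,
    fun m n hmn ↦ (hfr m n hmn).2⟩
  exact (pairwise_disjoint_on _).2 fun m n hmn ↦ (hfr m n hmn).1

theorem not_surjective_inclusionInDoubleDual_of_antilipschitzWith_ell_one
    [NormedAddCommGroup W] [NormedSpace 𝕜 W] {T : W →L[𝕜] ℓ¹(ι, 𝕜)} {K : NNReal}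
    (hT : AntilipschitzWith K T) (hW : ¬ FiniteDimensional 𝕜 W) :
    ¬ Function.Surjective (inclusionInDoubleDual 𝕜 W) := by
  intro hrefl
  obtain ⟨x, B, hx_norm, hx_mass, hB, hx_zero⟩ :=
    exists_glidingHump_of_injective (T := T.toLinearMap) hT.injective hW
      (show (3 / 4 : ℝ) < 1 by norm_num)
  simp only [ContinuousLinearMap.coe_coe] at hx_norm hx_mass hx_zero
  obtain ⟨φ, hφ_re, hφ_zero⟩ := exists_dual_two_mul_sum_norm_le_norm_add_re hB fun n ↦ T (x n)
  have hx_bdd (n : ℕ) : ‖x n‖ ≤ K := by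
    simpa [hx_norm] using hT.le_mul_norm_sub (x := x n) (y := 0)
  obtain ⟨v, hv⟩ := exists_forall_dual_tendsto_of_surjective_inclusionInDoubleDual hrefl
    (hyperfilter ℕ) hx_bdd
  have hv_zero : ∀ m, ∀ i ∈ B m, T v i = 0 := fun m i hi ↦
    tendsto_nhds_unique (hv (lp.evalCLM 𝕜 (fun _ ↦ 𝕜) 1 i ∘L T)) <|
      tendsto_const_nhds.congr' <| Nat.hyperfilter_le_atTop <|
        (eventually_gt_atTop m).mono fun n hmn ↦ (hx_zero m n hmn i hi).symm
  have hφ_half (n : ℕ) : 1 / 2 ≤ RCLike.re (φ (T (x n))) := by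
    linarith [hφ_re n, hx_mass n, hx_norm n]
  have hφ_lim : Tendsto (fun n ↦ RCLike.re (φ (T (x n)))) (hyperfilter ℕ) (𝓝 0) := by
    have h := (RCLike.continuous_re.tendsto _).comp (hv (φ ∘L T))
    rwa [ContinuousLinearMap.comp_apply, hφ_zero _ hv_zero, map_zero] at h
  linarith [ge_of_tendsto hφ_lim (Eventually.of_forall hφ_half)]

end GlidingHump

section SetIntegrals

variable {S ι G : Type*} [MeasurableSpace S] {μ : Measure S} [NormedAddCommGroup G]
  [NormedSpace ℝ G] {E : ι → Set S}

theorem sum_norm_setIntegral_le_integral_norm {s : Finset ι}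
    (hmeas : ∀ i ∈ s, MeasurableSet (E i))
    (hdisj : (s : Set ι).Pairwise (Function.onFun Disjoint E))
    {f : S → G} (hf : Integrable f μ) :
    ∑ i ∈ s, ‖∫ x in E i, f x ∂μ‖ ≤ ∫ x, ‖f x‖ ∂μ := calc
  ∑ i ∈ s, ‖∫ x in E i, f x ∂μ‖ ≤ ∑ i ∈ s, ∫ x in E i, ‖f x‖ ∂μ :=
    Finset.sum_le_sum fun _ _ ↦ norm_integral_le_integral_norm _
  _ = ∫ x in ⋃ i ∈ s, E i, ‖f x‖ ∂μ :=
    (integral_biUnion_finset s hmeas hdisj fun _ _ ↦ hf.norm.integrableOn).symm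
  _ ≤ ∫ x, ‖f x‖ ∂μ :=
    setIntegral_le_integral hf.norm (Eventually.of_forall fun _ ↦ norm_nonneg _)

theorem sum_norm_setIntegral_le_norm (hmeas : ∀ i, MeasurableSet (E i))
    (hdisj : Pairwise (Function.onFun Disjoint E)) (f : Lp G 1 μ) (s : Finset ι) :
    ∑ i ∈ s, ‖∫ x in E i, f x ∂μ‖ ≤ ‖f‖ := by
  rw [L1.norm_eq_integral_norm]
  exact sum_norm_setIntegral_le_integral_norm (fun i _ ↦ hmeas i) (hdisj.set_pairwise _)
    (L1.integrable_coeFn f)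

variable (𝕜 : Type*) [NormedField 𝕜] [NormedSpace 𝕜 G] [SMulCommClass ℝ 𝕜 G]

/-- The operator `f ↦ (∫_{E i} f)_i` from `L¹(μ)` to `ℓ¹` attached to a family of disjoint
measurable sets `E i`. -/
noncomputable def setIntegralsCLM (hmeas : ∀ i, MeasurableSet (E i))
    (hdisj : Pairwise (Function.onFun Disjoint E)) : Lp G 1 μ →L[𝕜] ℓ¹(ι, G) :=
  LinearMap.mkContinuous
    { toFun f := ⟨fun i ↦ ∫ x in E i, f x ∂μ, memℓp_gen' fun s ↦ by
        simpa using sum_norm_setIntegral_le_norm hmeas hdisj f s⟩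
      map_add' f g := by
        ext i
        calc ∫ x in E i, (f + g) x ∂μ = ∫ x in E i, f x + g x ∂μ :=
              integral_congr_ae (ae_restrict_of_ae (Lp.coeFn_add f g))
          _ = ∫ x in E i, f x ∂μ + ∫ x in E i, g x ∂μ :=
              integral_add (L1.integrable_coeFn f).integrableOn
                (L1.integrable_coeFn g).integrableOn
      map_smul' c f := by
        ext i
        calc ∫ x in E i, (c • f) x ∂μ = ∫ x in E i, c • f x ∂μ :=
              integral_congr_ae (ae_restrict_of_ae (Lp.coeFn_smul c f))
          _ = c • ∫ x in E i, f x ∂μ := integral_smul c _ }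
    1 fun f ↦ by
      refine lp.norm_le_of_forall_sum_le (by simp) (by positivity) fun s ↦ ?_
      simpa using sum_norm_setIntegral_le_norm hmeas hdisj f s

theorem setIntegralsCLM_apply (hmeas : ∀ i, MeasurableSet (E i))
    (hdisj : Pairwise (Function.onFun Disjoint E)) (f : Lp G 1 μ) (i : ι) :
    setIntegralsCLM 𝕜 hmeas hdisj f i = ∫ x in E i, f x ∂μ :=
  rfl

theorem norm_setIntegralsCLM_apply (hmeas : ∀ i, MeasurableSet (E i))
    (hdisj : Pairwise (Function.onFun Disjoint E)) (f : Lp G 1 μ) :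
    ‖setIntegralsCLM 𝕜 hmeas hdisj f‖ = ∑' i, ‖∫ x in E i, f x ∂μ‖ :=
  (hasSum_norm_of_lp_one (setIntegralsCLM 𝕜 hmeas hdisj f)).tsum_eq.symm

theorem norm_setIntegralsCLM_apply_le (hmeas : ∀ i, MeasurableSet (E i))
    (hdisj : Pairwise (Function.onFun Disjoint E)) (f : Lp G 1 μ) :
    ‖setIntegralsCLM 𝕜 hmeas hdisj f‖ ≤ ‖f‖ := by
  rw [norm_setIntegralsCLM_apply]
  exact Real.tsum_le_of_sum_le (fun _ ↦ norm_nonneg _) (sum_norm_setIntegral_le_norm hmeas hdisj f)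

end SetIntegrals

theorem isomorphism_onto_l1_subspace_of_partition_bound_general
    {𝕜 S ι : Type*} [RCLike 𝕜] [MeasurableSpace S] (μ : Measure S)
    (X : Submodule 𝕜 (Lp 𝕜 1 μ))
    (E : ι → Set S) (hmeas : ∀ i, MeasurableSet (E i))
    (hdisj : Pairwise (Function.onFun Disjoint E))
    (C : ℝ) (hC : 0 < C)
    (hbound : ∀ f ∈ X, C * ‖f‖ ≤ ∑' i, ‖∫ x in E i, (f : Lp 𝕜 1 μ) x ∂μ‖) :
    (∃ T : X →L[𝕜] ℓ¹(ι, 𝕜),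
      (∀ (f : X) (i : ι), T f i = ∫ x in E i, (f : Lp 𝕜 1 μ) x ∂μ) ∧
      Function.Injective T ∧
      (∀ f : X, C * ‖f‖ ≤ ‖T f‖) ∧ (∀ f : X, ‖T f‖ ≤ ‖f‖)) ∧
    (¬ FiniteDimensional 𝕜 X → ¬ Function.Surjective (inclusionInDoubleDual 𝕜 X)) := by
  let T : X →L[𝕜] ℓ¹(ι, 𝕜) := setIntegralsCLM 𝕜 hmeas hdisj ∘L X.subtypeL
  have hT_lower (f : X) : C * ‖f‖ ≤ ‖T f‖ :=
    (hbound f f.2).trans_eq (norm_setIntegralsCLM_apply 𝕜 hmeas hdisj (f : Lp 𝕜 1 μ)).symm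
  have hT_anti : AntilipschitzWith (Real.toNNReal C⁻¹) T := by
    refine AddMonoidHomClass.antilipschitz_of_bound T fun f ↦ ?_
    rw [Real.coe_toNNReal _ (inv_nonneg.2 hC.le), inv_mul_eq_div, le_div_iff₀' hC]
    exact hT_lower f
  refine ⟨⟨T, fun f i ↦ setIntegralsCLM_apply 𝕜 hmeas hdisj (f : Lp 𝕜 1 μ) i,
    hT_anti.injective, hT_lower,
    fun f ↦ norm_setIntegralsCLM_apply_le 𝕜 hmeas hdisj (f : Lp 𝕜 1 μ)⟩, ?_⟩
  exact not_surjective_inclusionInDoubleDual_of_antilipschitzWith_ell_one hT_anti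

/-- If the `L¹` norm on a subspace `X ⊆ L¹(μ)` is controlled by the sums
`Σ_m |∫_{E_m} f|` over a countable measurable partition `(E_m)`, then
`f ↦ (∫_{E_m} f)_m` is an isomorphism of `X` onto a subspace of `ℓ¹`;
consequently, if `X` is closed and infinite dimensional, it is not reflexive. -/
theorem isomorphism_onto_l1_subspace_of_partition_bound
    {S : Type*} [MeasurableSpace S] (μ : Measure S)
    (X : Subspace ℂ (Lp ℂ 1 μ))
    (E : ℕ → Set S) (hmeas : ∀ m, MeasurableSet (E m))
    (hdisj : Pairwise (Function.onFun Disjoint E)) (hcover : ⋃ m, E m = Set.univ)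
    (C : ℝ) (hC : 0 < C)
    (hbound : ∀ f ∈ X, C * ‖f‖ ≤ ∑' m : ℕ, ‖∫ x in E m, (f : Lp ℂ 1 μ) x ∂μ‖) :
    (∃ T : ↥X →L[ℂ] lp (fun _ : ℕ => ℂ) 1,
      (∀ (f : ↥X) (m : ℕ), (T f : ∀ _ : ℕ, ℂ) m = ∫ x in E m, (f : Lp ℂ 1 μ) x ∂μ) ∧
      Function.Injective T ∧
      (∀ f : ↥X, C * ‖f‖ ≤ ‖T f‖) ∧ (∀ f : ↥X, ‖T f‖ ≤ ‖f‖)) ∧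
    (IsClosed (X : Set (Lp ℂ 1 μ)) → ¬ FiniteDimensional ℂ ↥X →
      ¬ IsReflexiveSpace ↥X) := by
  obtain ⟨hT, hrefl⟩ := isomorphism_onto_l1_subspace_of_partition_bound_general μ X E hmeas hdisj
    C hC hbound
  exact ⟨hT, fun _ ↦ hrefl⟩
end

section
/- Let Y be a closed subspace of C₀(ℝⁿ) contained in the range of the Fourier transform on L¹(ℝⁿ). If Y is reflexive, then Y is finite dimensional. -/
open MeasureTheory NormedSpace ZeroAtInfty RealInnerProductSpace

/-!
In a reflexive space, iterated limits of bounded sequences of vectors and functionals along an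
ultrafilter can be interchanged. By the closed graph theorem, inverting the injective Fourier
transform lifts `Y` to a bounded map `T : Y → L¹`. If the image of the unit ball were not tight, a
sliding mass argument together with the signs of the moving pieces would contradict the interchange
of limits; so it is tight, and therefore the unit ball of `Y`, consisting of the transforms of its
elements, is equicontinuous. If `Y` were infinite dimensional, for every compact set it would
contain elements of norm about `1` that are uniformly small there (finitely many linear conditions
suffice, by equicontinuity). Choosing these successively with almost disjoint supports gives bounded
partial sums, whose values at the peaks again have unequal iterated limits.
-/

open Filter Topology
open scoped ENNReal BoundedContinuousFunction FourierTransform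

section Reflexive

theorem exists_strongDual_forall_tendsto {𝕜 V ι : Type*} [RCLike 𝕜] [NormedAddCommGroup V]
    [NormedSpace 𝕜 V] {φ : ι → StrongDual 𝕜 V} {C : ℝ} (hφ : ∀ j, ‖φ j‖ ≤ C) (u : Ultrafilter ι) :
    ∃ φ' : StrongDual 𝕜 V, ∀ v, Tendsto (fun j ↦ φ j v) u (𝓝 (φ' v)) := by
  have hmem : ∀ j, StrongDual.toWeakDual (φ j) ∈
      WeakDual.toStrongDual ⁻¹' Metric.closedBall (0 : StrongDual 𝕜 V) C := fun j ↦ by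
    simpa using hφ j
  obtain ⟨φ', -, hφ'⟩ := (WeakDual.isCompact_closedBall 0 C).ultrafilter_le_nhds
    (u.map fun j ↦ StrongDual.toWeakDual (φ j))
    (le_principal_iff.2 <| mem_map.2 <| Eventually.of_forall hmem)
  exact ⟨WeakDual.toStrongDual φ', fun v ↦
    ((WeakDual.eval_continuous v).tendsto φ').comp hφ'⟩

variable {W : Type*} [NormedAddCommGroup W] [NormedSpace ℂ W]

namespace IsReflexiveSpace

theorem completeSpace (hW : IsReflexiveSpace W) : CompleteSpace W := by
  let e : W ≃ₗᵢ[ℂ] StrongDual ℂ (StrongDual ℂ W) :=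
    LinearIsometryEquiv.ofSurjective (inclusionInDoubleDualLi ℂ) hW
  exact e.toIsometryEquiv.completeSpace

theorem exists_forall_tendsto (hW : IsReflexiveSpace W) {ι : Type*} {y : ι → W} {C : ℝ}
    (hy : ∀ k, ‖y k‖ ≤ C) (u : Ultrafilter ι) :
    ∃ x : W, ∀ φ : StrongDual ℂ W, Tendsto (fun k ↦ φ (y k)) u (𝓝 (φ x)) := by
  obtain ⟨ψ, hψ⟩ := exists_strongDual_forall_tendsto
    (fun k ↦ (double_dual_bound ℂ W (y k)).trans (hy k)) u
  obtain ⟨x, rfl⟩ := hW ψ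
  exact ⟨x, hψ⟩

/-- Grothendieck's double limit criterion: at weak cluster points `x` of `y` and `φ'` of `φ` both
iterated limits equal `φ' x`. -/
theorem le_of_double_limit (hW : IsReflexiveSpace W) {y : ℕ → W} {φ : ℕ → StrongDual ℂ W}
    {C D a b : ℝ} (hy : ∀ k, ‖y k‖ ≤ C) (hφ : ∀ j, ‖φ j‖ ≤ D)
    (hb : ∀ j k, j ≤ k → b ≤ (φ j (y k)).re) (ha : ∀ j k, k < j → (φ j (y k)).re ≤ a) :
    b ≤ a := by
  obtain ⟨φ', hφ'⟩ := exists_strongDual_forall_tendsto hφ (hyperfilter ℕ)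
  obtain ⟨x, hx⟩ := hW.exists_forall_tendsto hy (hyperfilter ℕ)
  have tendsto_re {f : ℕ → ℂ} {z : ℂ} (h : Tendsto f (hyperfilter ℕ) (𝓝 z)) :
      Tendsto (fun j ↦ (f j).re) (hyperfilter ℕ) (𝓝 z.re) :=
    (Complex.continuous_re.tendsto z).comp h
  have eventually_lt (j : ℕ) : ∀ᶠ k in (hyperfilter ℕ : Filter ℕ), j < k :=
    Nat.hyperfilter_le_atTop (eventually_gt_atTop j)
  have hb' : b ≤ (φ' x).re := ge_of_tendsto (tendsto_re (hφ' x)) <| .of_forall fun j ↦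
    ge_of_tendsto (tendsto_re (hx (φ j))) <| (eventually_lt j).mono fun k hk ↦ hb j k hk.le
  have ha' : (φ' x).re ≤ a := le_of_tendsto (tendsto_re (hx φ')) <| .of_forall fun k ↦
    le_of_tendsto (tendsto_re (hφ' (y k))) <| (eventually_lt k).mono fun j hj ↦ ha j k hj
  exact hb'.trans ha'

end IsReflexiveSpace

end Reflexive

theorem exists_continuousLinearMap_lift_of_range_subset {𝕜 E F G : Type*}
    [NontriviallyNormedField 𝕜] [NormedAddCommGroup E] [NormedSpace 𝕜 E] [CompleteSpace E]
    [NormedAddCommGroup F] [NormedSpace 𝕜 F] [CompleteSpace F]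
    [AddCommGroup G] [Module 𝕜 G] [TopologicalSpace G] [T2Space G]
    {J : F →L[𝕜] G} (hJ : Function.Injective J) {i : E →L[𝕜] G}
    (hi : Set.range i ⊆ Set.range J) :
    ∃ T : E →L[𝕜] F, ∀ x, J (T x) = i x := by
  let L : E →ₗ[𝕜] F := (LinearEquiv.ofInjective (J : F →ₗ[𝕜] G) hJ).symm ∘ₗ
    (i : E →ₗ[𝕜] G).codRestrict (J : F →ₗ[𝕜] G).range fun x ↦ hi ⟨x, rfl⟩
  have hL (x : E) : J (L x) = i x :=
    congrArg Subtype.val ((LinearEquiv.ofInjective (J : F →ₗ[𝕜] G) hJ).apply_symm_apply _)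
  have hcont : Continuous L := L.continuous_of_seq_closed_graph fun u x z hu hLu ↦ by
    refine hJ <| (tendsto_nhds_unique ((J.continuous.tendsto z).comp hLu) ?_).trans (hL x).symm
    exact ((i.continuous.tendsto x).comp hu).congr fun k ↦ (hL (u k)).symm
  exact ⟨⟨L, hcont⟩, hL⟩

section Tightness

theorem exists_sliding_sequence {ι : Type*} {a : ι → ℕ → ℝ} (ha : ∀ i, Antitone (a i))
    (hlim : ∀ i, Tendsto (a i) atTop (𝓝 0)) {C : ℝ} (hC : ∀ i, a i 0 ≤ C) {ε : ℝ}
    (hε : ∀ n, ∃ i, ε < a i n) :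
    ∃ η ≥ ε, ∀ δ > 0, ∃ (i : ℕ → ι) (n : ℕ → ℕ), Monotone n ∧ (∀ j k, a j (n k) < η + δ) ∧
      (∀ k, η - δ < a (i k) (n k)) ∧ ∀ k, a (i k) (n (k + 1)) < δ := by
  have hbdd (n : ℕ) : BddAbove (Set.range fun i ↦ a i n) :=
    ⟨C, Set.forall_mem_range.2 fun i ↦ (ha i n.zero_le).trans (hC i)⟩
  let v (n : ℕ) : ℝ := ⨆ i, a i n
  have le_v (i : ι) (n : ℕ) : a i n ≤ v n := le_ciSup (hbdd n) i
  have ε_le (n : ℕ) : ε ≤ v n := (hε n).elim fun i hi ↦ hi.le.trans (le_v i n)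
  have : Nonempty ι := (hε 0).nonempty
  refine ⟨⨅ n, v n, le_ciInf ε_le, fun δ hδ ↦ ?_⟩
  obtain ⟨N, hN⟩ := exists_lt_of_ciInf_lt (lt_add_of_pos_right (⨅ n, v n) hδ)
  have step (n : ℕ) : ∃ i m, n ≤ m ∧ (⨅ n, v n) - δ < a i n ∧ a i m < δ := by
    have hη : (⨅ n, v n) ≤ v n := ciInf_le ⟨ε, Set.forall_mem_range.2 ε_le⟩ n
    obtain ⟨i, hi⟩ := exists_lt_of_lt_ciSup (show (⨅ n, v n) - δ < v n by linarith)
    obtain ⟨m, hnm, hm⟩ :=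
      ((eventually_ge_atTop n).and ((hlim i).eventually_lt_const hδ)).exists
    exact ⟨i, m, hnm, hi, hm⟩
  choose i m le_m lt_a a_lt using step
  let n (k : ℕ) : ℕ := m^[k] N
  have n_succ (k : ℕ) : n (k + 1) = m (n k) := Function.iterate_succ_apply' m k N
  have n_mono : Monotone n := monotone_nat_of_le_succ fun k ↦ n_succ k ▸ le_m (n k)
  refine ⟨fun k ↦ i (n k), n, n_mono, fun j k ↦ ?_, fun k ↦ lt_a _, fun k ↦ n_succ k ▸ a_lt _⟩
  exact ((ha j (n_mono k.zero_le)).trans (le_v j N)).trans_lt hN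

variable {α : Type*} [MeasurableSpace α] {μ : Measure α}

theorem exists_measurable_mul_eq_norm {A : ℕ → Set α} (hA : ∀ k, MeasurableSet (A k))
    (hdisj : Pairwise fun i j ↦ Disjoint (A i) (A j)) {f : ℕ → α → ℂ}
    (hf : ∀ k, Measurable (f k)) :
    ∃ g : α → ℂ, Measurable g ∧ (∀ x, ‖g x‖ ≤ 1) ∧ ∀ k, ∀ x ∈ A k, g x * f k x = ‖f k x‖ := by
  obtain ⟨F, F_meas, hF⟩ := exists_measurable_piecewise A hA f hf fun i j hij ↦ by
    simp [(hdisj hij).inter_eq]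
  refine ⟨fun x ↦ (starRingEnd ℂ) (F x) / ‖F x‖, by fun_prop, fun x ↦ ?_, fun k x hx ↦ ?_⟩
  · simpa using div_self_le_one ‖F x‖
  · change (starRingEnd ℂ) (F x) / ‖F x‖ * f k x = ‖f k x‖
    rw [hF k hx, div_mul_eq_mul_div, Complex.conj_mul', sq, mul_self_div_self]

theorem norm_setIntegral_mul_le {g h : α → ℂ} (hg : ∀ x, ‖g x‖ ≤ 1) {s : Set α}
    (hh : IntegrableOn h s μ) : ‖∫ x in s, g x * h x ∂μ‖ ≤ ∫ x in s, ‖h x‖ ∂μ :=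
  norm_integral_le_of_norm_le hh.norm <| .of_forall fun x ↦
    (norm_mul_le _ _).trans (mul_le_of_le_one_left (norm_nonneg _) (hg x))

theorem exists_strongDual_L1_eq_setIntegral {g : α → ℂ} (hg : Measurable g)
    (hg_le : ∀ x, ‖g x‖ ≤ 1) {s : Set α} (hs : MeasurableSet s) :
    ∃ Φ : StrongDual ℂ (α →₁[μ] ℂ), ‖Φ‖ ≤ 1 ∧ ∀ h, Φ h = ∫ x in s, g x * h x ∂μ := by
  have hgs : MemLp (s.indicator g) ∞ μ :=
    memLp_top_of_bound (hg.indicator hs).aestronglyMeasurable 1 <| .of_forall fun x ↦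
      (norm_indicator_le_norm_self g x).trans (hg_le x)
  let Φ : StrongDual ℂ (α →₁[μ] ℂ) :=
    (ContinuousLinearMap.mul ℂ ℂ).lpPairing μ ∞ 1 hgs.toLp
  have hΦ (h : α →₁[μ] ℂ) : Φ h = ∫ x in s, g x * h x ∂μ := by
    rw [ContinuousLinearMap.lpPairing_eq_integral, ← integral_indicator hs]
    refine integral_congr_ae ?_
    filter_upwards [hgs.coeFn_toLp] with x hx
    rw [ContinuousLinearMap.mul_apply', hx, Set.indicator_mul_left]
  refine ⟨Φ, Φ.opNorm_le_bound zero_le_one fun h ↦ ?_, hΦ⟩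
  have hh : Integrable h μ := L1.integrable_coeFn h
  calc ‖Φ h‖ ≤ ∫ x in s, ‖h x‖ ∂μ := hΦ h ▸ norm_setIntegral_mul_le hg_le hh.integrableOn
    _ ≤ ∫ x, ‖h x‖ ∂μ := setIntegral_le_integral hh.norm (.of_forall fun x ↦ norm_nonneg _)
    _ = 1 * ‖h‖ := by rw [one_mul, L1.norm_eq_integral_norm]

theorem two_mul_setIntegral_norm_sub_le {g h : α → ℂ} (hg : Measurable g)
    (hg_le : ∀ x, ‖g x‖ ≤ 1) {A S : Set α} (hA : MeasurableSet A) (hAS : A ⊆ S)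
    (hh : IntegrableOn h S μ) (hgh : ∀ x ∈ A, g x * h x = ‖h x‖) :
    2 * ∫ x in A, ‖h x‖ ∂μ - ∫ x in S, ‖h x‖ ∂μ ≤ (∫ x in S, g x * h x ∂μ).re := by
  have hint : IntegrableOn (fun x ↦ g x * h x) S μ :=
    hh.bdd_mul hg.aestronglyMeasurable (.of_forall hg_le)
  have hnonneg (x : α) : 0 ≤ (g x * h x).re + ‖h x‖ := by
    have hgh_le : ‖g x * h x‖ ≤ ‖h x‖ :=
      (norm_mul_le _ _).trans (mul_le_of_le_one_left (norm_nonneg _) (hg_le x))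
    linarith [neg_le_of_abs_le ((Complex.abs_re_le_norm _).trans hgh_le)]
  have hle : 2 * ∫ x in A, ‖h x‖ ∂μ ≤ (∫ x in S, g x * h x ∂μ).re + ∫ x in S, ‖h x‖ ∂μ := by
    calc 2 * ∫ x in A, ‖h x‖ ∂μ = ∫ x in A, ((g x * h x).re + ‖h x‖) ∂μ := by
          rw [← integral_const_mul]
          refine setIntegral_congr_fun hA fun x hx ↦ ?_
          simp only [hgh x hx, Complex.ofReal_re, two_mul]
      _ ≤ ∫ x in S, ((g x * h x).re + ‖h x‖) ∂μ :=
          setIntegral_mono_set (hint.re.add hh.norm) (.of_forall hnonneg) hAS.eventuallyLE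
      _ = (∫ x in S, g x * h x ∂μ).re + ∫ x in S, ‖h x‖ ∂μ :=
          (integral_add hint.re hh.norm).trans (congrArg (· + _) (integral_re hint))
  linarith

variable {W : Type*} [NormedAddCommGroup W] [NormedSpace ℂ W]

namespace IsReflexiveSpace

/-- The double limit criterion is tested against the functionals `h ↦ ∫ x in u j, g x * h x ∂μ`,
where `g` is the sign of `T (y k)` on each of the disjoint sets `u k \ u (k + 1)`. -/
theorem two_mul_sub_sub_le_of_sliding_mass (hW : IsReflexiveSpace W) (T : W →L[ℂ] (α →₁[μ] ℂ))
    {u : ℕ → Set α} (hu : ∀ n, MeasurableSet (u n)) (hu_anti : Antitone u) {y : ℕ → W} {C : ℝ}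
    (hy : ∀ k, ‖y k‖ ≤ C) {M m δ : ℝ} (hM : ∀ j k, ∫ x in u j, ‖T (y k) x‖ ∂μ ≤ M)
    (hm : ∀ k, m ≤ ∫ x in u k, ‖T (y k) x‖ ∂μ)
    (hδ : ∀ k, ∫ x in u (k + 1), ‖T (y k) x‖ ∂μ ≤ δ) :
    2 * (m - δ) - M ≤ δ := by
  have hT (k : ℕ) : Integrable (T (y k)) μ := L1.integrable_coeFn (T (y k))
  let A (k : ℕ) : Set α := u k \ u (k + 1)
  have hA (k : ℕ) : MeasurableSet (A k) := (hu k).diff (hu (k + 1))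
  have A_disjoint : Pairwise fun i j ↦ Disjoint (A i) (A j) := by
    refine (pairwise_disjoint_on A).2 fun i j hij ↦ ?_
    exact Set.disjoint_left.2 fun x hxi hxj ↦ hxi.2 (hu_anti (Nat.succ_le_of_lt hij) hxj.1)
  have mass_A (k : ℕ) : m - δ ≤ ∫ x in A k, ‖T (y k) x‖ ∂μ := by
    rw [setIntegral_sdiff (hu (k + 1)) (hT k).norm.integrableOn (hu_anti k.le_succ)]
    linarith [hm k, hδ k]
  obtain ⟨g, hg, hg_le, hgT⟩ := exists_measurable_mul_eq_norm hA A_disjoint fun k ↦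
    (Lp.stronglyMeasurable (T (y k))).measurable
  choose Φ Φ_le hΦ using fun j ↦ exists_strongDual_L1_eq_setIntegral (μ := μ) hg hg_le (hu j)
  refine hW.le_of_double_limit (φ := fun j ↦ (Φ j).comp T) (D := ‖T‖) hy (fun j ↦ ?_)
    (fun j k hjk ↦ ?_) fun j k hkj ↦ ?_
  · exact ((Φ j).opNorm_comp_le T).trans (mul_le_of_le_one_left (norm_nonneg T) (Φ_le j))
  · have := two_mul_setIntegral_norm_sub_le hg hg_le (hA k)
      (Set.sdiff_subset.trans (hu_anti hjk)) (hT k).integrableOn (hgT k)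
    rw [ContinuousLinearMap.comp_apply, hΦ]
    linarith [mass_A k, hM j k]
  · calc (Φ j (T (y k))).re ≤ ‖Φ j (T (y k))‖ := Complex.re_le_norm _
      _ ≤ ∫ x in u j, ‖T (y k) x‖ ∂μ := by
        rw [hΦ]
        exact norm_setIntegral_mul_le hg_le (hT k).integrableOn
      _ ≤ ∫ x in u (k + 1), ‖T (y k) x‖ ∂μ :=
        setIntegral_mono_set (hT k).norm.integrableOn (.of_forall fun x ↦ norm_nonneg _)
          (hu_anti (Nat.succ_le_of_lt hkj)).eventuallyLE
      _ ≤ δ := hδ k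

theorem exists_forall_setIntegral_norm_le (hW : IsReflexiveSpace W) (T : W →L[ℂ] (α →₁[μ] ℂ))
    {s : ℕ → Set α} (hs : ∀ n, MeasurableSet (s n)) (hs_anti : Antitone s)
    (hs_inter : ⋂ n, s n = ∅) {ε : ℝ} (hε : 0 < ε) :
    ∃ n, ∀ y : W, ‖y‖ ≤ 1 → ∫ x in s n, ‖T y x‖ ∂μ ≤ ε := by
  by_contra! hcon
  have hT (y : W) : Integrable (T y) μ := L1.integrable_coeFn (T y)
  let mass (y : {y : W // ‖y‖ ≤ 1}) (n : ℕ) : ℝ := ∫ x in s n, ‖T y x‖ ∂μ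
  have mass_anti (y : {y : W // ‖y‖ ≤ 1}) : Antitone (mass y) := fun m n hmn ↦
    setIntegral_mono_set (hT y).norm.integrableOn (.of_forall fun x ↦ norm_nonneg _)
      (hs_anti hmn).eventuallyLE
  have mass_tendsto (y : {y : W // ‖y‖ ≤ 1}) : Tendsto (mass y) atTop (𝓝 0) := by
    have := tendsto_setIntegral_of_antitone hs hs_anti ⟨0, (hT y).norm.integrableOn⟩
    rwa [hs_inter, setIntegral_empty] at this
  have mass_le (y : {y : W // ‖y‖ ≤ 1}) : mass y 0 ≤ ‖T‖ :=
    calc mass y 0 ≤ ∫ x, ‖T y x‖ ∂μ :=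
          setIntegral_le_integral (hT y).norm (.of_forall fun x ↦ norm_nonneg _)
      _ = ‖T y‖ := (L1.norm_eq_integral_norm _).symm
      _ ≤ ‖T‖ := T.unit_le_opNorm y y.2
  obtain ⟨η, hη, hseq⟩ := exists_sliding_sequence mass_anti mass_tendsto mass_le fun n ↦ by
    simpa [mass] using hcon n
  obtain ⟨y, n, hn, lt_add, sub_lt, lt_δ⟩ := hseq (η / 7) (by linarith)
  have := hW.two_mul_sub_sub_le_of_sliding_mass T (fun k ↦ hs (n k)) (hs_anti.comp_monotone hn)
    (fun k ↦ (y k).2) (fun j k ↦ (lt_add (y k) j).le) (fun k ↦ (sub_lt k).le)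
    (fun k ↦ (lt_δ k).le)
  linarith

end IsReflexiveSpace

end Tightness

section GlidingHump

theorem exists_finset_forall_dist_lt_of_equicontinuous {ι X E : Type*} [TopologicalSpace X]
    [PseudoMetricSpace E] {F : ι → X → E} (hF : Equicontinuous F) {K : Set X} (hK : IsCompact K)
    {ε : ℝ} (hε : 0 < ε) :
    ∃ t : Finset X, ∀ x ∈ K, ∃ p ∈ t, ∀ i, dist (F i p) (F i x) < ε := by
  obtain ⟨t, -, ht⟩ := hK.elim_nhds_subcover (fun p ↦ {x | ∀ i, dist (F i p) (F i x) < ε})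
    fun p _ ↦ Metric.equicontinuousAt_iff_right.1 (hF p) ε hε
  exact ⟨t, fun x hx ↦ by simpa using ht hx⟩

variable {𝕜 X W : Type*} [RCLike 𝕜] [TopologicalSpace X]

variable (𝕜 X) in
/-- The inclusion of `C₀(X, 𝕜)` into the bounded continuous functions, as a linear isometry; it
transfers the norm and the evaluation functionals to `C₀(X, 𝕜)`. -/
def zeroAtInftyToBCF : C₀(X, 𝕜) →ₗᵢ[𝕜] X →ᵇ 𝕜 where
  toFun F := F.toBCF
  map_add' _ _ := rfl
  map_smul' _ _ := rfl
  norm_map' _ := rfl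

@[simp]
theorem zeroAtInftyToBCF_apply (F : C₀(X, 𝕜)) (x : X) : zeroAtInftyToBCF 𝕜 X F x = F x := rfl

theorem norm_apply_le_norm_zeroAtInfty (F : C₀(X, 𝕜)) (x : X) : ‖F x‖ ≤ ‖F‖ :=
  F.toBCF.norm_coe_le_norm x

theorem norm_zeroAtInfty_le {F : C₀(X, 𝕜)} {C : ℝ} (hC : 0 ≤ C) (hF : ∀ x, ‖F x‖ ≤ C) : ‖F‖ ≤ C :=
  (BoundedContinuousFunction.norm_le (f := F.toBCF) hC).2 hF

variable [NormedAddCommGroup W]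

section Humps

variable [NormedSpace 𝕜 W] {e : W →ₗᵢ[𝕜] C₀(X, 𝕜)}

theorem exists_norm_eq_one_forall_norm_lt (hW : ¬ FiniteDimensional 𝕜 W)
    (he : Equicontinuous fun y : Metric.closedBall (0 : W) 1 ↦ ⇑(e y)) {K : Set X}
    (hK : IsCompact K) {ε : ℝ} (hε : 0 < ε) :
    ∃ y : W, ‖y‖ = 1 ∧ ∀ x ∈ K, ‖e y x‖ < ε := by
  obtain ⟨t, ht⟩ := exists_finset_forall_dist_lt_of_equicontinuous he hK hε
  let evalOn : W →ₗ[𝕜] t → 𝕜 :=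
    { toFun y p := e y p
      map_add' _ _ := by ext; simp
      map_smul' _ _ := by ext; simp }
  have evalOn_not_injective : ¬ Function.Injective evalOn := fun h ↦
    hW (FiniteDimensional.of_injective evalOn h)
  obtain ⟨y, hy, y_ne⟩ : ∃ y, evalOn y = 0 ∧ y ≠ 0 := by
    simpa [injective_iff_map_eq_zero] using evalOn_not_injective
  let z : W := ((‖y‖ : 𝕜)⁻¹) • y
  have norm_z : ‖z‖ = 1 := norm_smul_inv_norm y_ne
  refine ⟨z, norm_z, fun x hx ↦ ?_⟩
  obtain ⟨p, hp, hpx⟩ := ht x hx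
  have y_apply_p : e y p = 0 := congrFun hy ⟨p, hp⟩
  have z_apply_p : e z p = 0 := by simp [z, y_apply_p]
  simpa [z_apply_p] using hpx ⟨z, mem_closedBall_zero_iff.2 norm_z.le⟩

theorem exists_hump (hW : ¬ FiniteDimensional 𝕜 W)
    (he : Equicontinuous fun y : Metric.closedBall (0 : W) 1 ↦ ⇑(e y))
    {K : Set X} (hK : IsCompact K) {ε : ℝ} (hε : 0 < ε) :
    ∃ (y : W) (p : X) (K' : Set X), ‖y‖ ≤ 2 ∧ e y p = 1 ∧ IsCompact K' ∧ K ⊆ K' ∧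
      ∀ x ∉ K' \ K, ‖e y x‖ ≤ ε := by
  obtain ⟨z, norm_z, hzK⟩ := exists_norm_eq_one_forall_norm_lt hW he hK (half_pos hε)
  obtain ⟨p, hp⟩ : ∃ p, 1 / 2 < ‖e z p‖ := by
    by_contra! h
    have := norm_zeroAtInfty_le (by norm_num) h
    norm_num [e.norm_map, norm_z] at this
  obtain ⟨L, hL, hLz⟩ : ∃ L, IsCompact L ∧ ∀ x ∉ L, ‖e z x‖ < ε / 2 := by
    have hz : ∀ᶠ x in cocompact X, ‖e z x‖ < ε / 2 :=
      (zero_at_infty (e z)).norm.eventually_lt_const (by simpa using half_pos hε)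
    obtain ⟨L, hL, hLz⟩ := mem_cocompact.1 hz
    exact ⟨L, hL, fun x hx ↦ hLz hx⟩
  have norm_inv_le : ‖(e z p)⁻¹‖ ≤ 2 := by
    rw [norm_inv]
    exact inv_le_of_inv_le₀ two_pos (by linarith)
  refine ⟨(e z p)⁻¹ • z, p, L ∪ K, ?_, ?_, hL.union hK, Set.subset_union_right, fun x hx ↦ ?_⟩
  · rwa [norm_smul, norm_z, mul_one]
  · simpa using inv_mul_cancel₀ (norm_pos_iff.1 (one_half_pos.trans hp))
  · have norm_z_apply : ‖e z x‖ ≤ ε / 2 := by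
      by_cases hxK : x ∈ K
      · exact (hzK x hxK).le
      · exact (hLz x fun hxL ↦ hx ⟨.inl hxL, hxK⟩).le
    calc ‖e ((e z p)⁻¹ • z) x‖ = ‖(e z p)⁻¹‖ * ‖e z x‖ := by simp
      _ ≤ 2 * (ε / 2) := by gcongr
      _ = ε := by ring

theorem exists_disjoint_humps (hW : ¬ FiniteDimensional 𝕜 W)
    (he : Equicontinuous fun y : Metric.closedBall (0 : W) 1 ↦ ⇑(e y)) {δ : ℕ → ℝ}
    (hδ : ∀ k, 0 < δ k) :
    ∃ (y : ℕ → W) (p : ℕ → X) (A : ℕ → Set X), (∀ k, ‖y k‖ ≤ 2) ∧ (∀ k, e (y k) (p k) = 1) ∧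
      (Pairwise fun i j ↦ Disjoint (A i) (A j)) ∧ ∀ k, ∀ x ∉ A k, ‖e (y k) x‖ ≤ δ k := by
  choose y p K' norm_y_le apply_p hK' subset_K' norm_apply_le using
    fun (k : ℕ) (K : TopologicalSpace.Compacts X) ↦ exists_hump hW he K.isCompact (hδ k)
  let K (k : ℕ) : TopologicalSpace.Compacts X := k.rec ⊥ fun k K ↦ ⟨K' k K, hK' k K⟩
  have K_mono : Monotone K := monotone_nat_of_le_succ fun k ↦ subset_K' k (K k)
  let A (k : ℕ) : Set X := {x | x ∈ K (k + 1) ∧ x ∉ K k}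
  refine ⟨fun k ↦ y k (K k), fun k ↦ p k (K k), A, fun k ↦ norm_y_le k (K k),
    fun k ↦ apply_p k (K k), ?_, fun k ↦ norm_apply_le k (K k)⟩
  refine (pairwise_disjoint_on _).2 fun i j hij ↦ ?_
  exact Set.disjoint_left.2 fun x hxi hxj ↦ hxj.2 (K_mono (Nat.succ_le_of_lt hij) hxi.1)

theorem norm_sum_erase_le {ι E : Type*} [SeminormedAddCommGroup E] [DecidableEq ι] {z : ι → E}
    {δ : ι → ℝ} {c : ℝ} (hδ : ∀ s : Finset ι, ∑ j ∈ s, δ j ≤ c) {i : ι}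
    (hz : ∀ j ≠ i, ‖z j‖ ≤ δ j) (s : Finset ι) : ‖∑ j ∈ s.erase i, z j‖ ≤ c :=
  (norm_sum_le_of_le _ fun _ hj ↦ hz _ (Finset.ne_of_mem_erase hj)).trans (hδ _)

theorem norm_sum_humps_le {ι : Type*} {y : ι → W} {A : ι → Set X}
    (hA : Pairwise fun i j ↦ Disjoint (A i) (A j)) {δ : ι → ℝ} {c C : ℝ}
    (hδ : ∀ s : Finset ι, ∑ j ∈ s, δ j ≤ c) (hC : 0 ≤ C) (hy : ∀ k, ‖y k‖ ≤ C)
    (hyA : ∀ k, ∀ x ∉ A k, ‖e (y k) x‖ ≤ δ k) (s : Finset ι) : ‖∑ j ∈ s, y j‖ ≤ C + c := by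
  classical
  have hc : 0 ≤ c := by simpa using hδ ∅
  rw [← e.norm_map]
  refine norm_zeroAtInfty_le (add_nonneg hC hc) fun x ↦ ?_
  rw [← zeroAtInftyToBCF_apply, map_sum, map_sum, BoundedContinuousFunction.sum_apply]
  simp only [zeroAtInftyToBCF_apply]
  by_cases hx : ∃ i ∈ s, x ∈ A i
  · obtain ⟨i, hi, hxi⟩ := hx
    rw [← Finset.add_sum_erase s _ hi]
    refine norm_add_le_of_le ?_ (norm_sum_erase_le hδ (fun j hj ↦ hyA j x ?_) s)
    · exact (norm_apply_le_norm_zeroAtInfty _ x).trans ((e.norm_map _).trans_le (hy i))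
    · exact Set.disjoint_left.1 (hA hj.symm) hxi
  · have hxs : ∀ j ∈ s, ‖e (y j) x‖ ≤ δ j := fun j hj ↦ hyA j x fun h ↦ hx ⟨j, hj, h⟩
    exact (norm_sum_le_of_le s hxs).trans ((hδ s).trans (le_add_of_nonneg_left hC))

end Humps

variable [NormedSpace ℂ W]

/-- Disjoint humps span a copy of `c₀`, whose summing basis fails the double limit criterion against
the evaluations at the peaks. -/
theorem IsReflexiveSpace.finiteDimensional_of_equicontinuous (hW : IsReflexiveSpace W)
    {e : W →ₗᵢ[ℂ] C₀(X, ℂ)}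
    (he : Equicontinuous fun y : Metric.closedBall (0 : W) 1 ↦ ⇑(e y)) :
    FiniteDimensional ℂ W := by
  by_contra hfin
  obtain ⟨δ, δ_pos, c, hδ, hc⟩ := posSumOfEncodable (show (0 : ℝ) < 1 / 4 by norm_num) ℕ
  have sum_δ_le (s : Finset ℕ) : ∑ j ∈ s, δ j ≤ 1 / 4 :=
    (sum_le_hasSum s (fun j _ ↦ (δ_pos j).le) hδ).trans hc
  obtain ⟨y, p, A, norm_y_le, apply_p, A_disjoint, norm_apply_le⟩ :=
    exists_disjoint_humps hfin he δ_pos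
  have p_mem (j : ℕ) : p j ∈ A j := by
    by_contra hp
    have hle : 1 ≤ δ j := by simpa [apply_p] using norm_apply_le j (p j) hp
    have := sum_δ_le {j}
    rw [Finset.sum_singleton] at this
    linarith
  let φ (j : ℕ) : StrongDual ℂ W := (BoundedContinuousFunction.evalCLM ℂ (p j)).comp
    ((zeroAtInftyToBCF ℂ X).comp e).toContinuousLinearMap
  have φ_apply (j : ℕ) (w : W) : φ j w = e w (p j) := rfl
  have norm_φ_le (j : ℕ) : ‖φ j‖ ≤ 1 := (φ j).opNorm_le_bound zero_le_one fun w ↦ by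
    simpa [φ_apply] using norm_apply_le_norm_zeroAtInfty (e w) (p j)
  have norm_sum_erase (j : ℕ) (s : Finset ℕ) : ‖∑ i ∈ s.erase j, φ j (y i)‖ ≤ 1 / 4 :=
    norm_sum_erase_le sum_δ_le
      (fun i hi ↦ norm_apply_le i _ (Set.disjoint_left.1 (A_disjoint hi.symm) (p_mem j))) s
  have double_limit : (3 / 4 : ℝ) ≤ 1 / 4 := by
    refine hW.le_of_double_limit (y := fun k ↦ ∑ i ∈ Finset.range (k + 1), y i)
      (fun k ↦ norm_sum_humps_le A_disjoint sum_δ_le zero_le_two norm_y_le norm_apply_le _)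
      norm_φ_le (fun j k hjk ↦ ?_) fun j k hkj ↦ ?_
    · have hj : j ∈ Finset.range (k + 1) := Finset.mem_range_succ_iff.2 hjk
      have := (abs_le.1 ((Complex.abs_re_le_norm _).trans
        (norm_sum_erase j (Finset.range (k + 1))))).1
      rw [map_sum, ← Finset.add_sum_erase _ _ hj, φ_apply, apply_p, Complex.add_re, Complex.one_re]
      linarith
    · have hj : j ∉ Finset.range (k + 1) := by simpa using hkj
      rw [map_sum, ← Finset.erase_eq_of_notMem hj]
      exact (Complex.re_le_norm _).trans (norm_sum_erase j _)
  norm_num at double_limit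

end GlidingHump

section Fourier

theorem norm_fourierChar_sub_le {V : Type*} [NormedAddCommGroup V] [InnerProductSpace ℝ V]
    (x ξ η : V) :
    ‖(Real.fourierChar (-⟪x, ξ⟫) : ℂ) - Real.fourierChar (-⟪x, η⟫)‖ ≤
      2 * Real.pi * ‖x‖ * ‖ξ - η‖ := by
  have factored : (Real.fourierChar (-⟪x, ξ⟫) : ℂ) - Real.fourierChar (-⟪x, η⟫) =
      Real.fourierChar (-⟪x, η⟫) * (Real.fourierChar (-⟪x, ξ - η⟫) - 1) := by
    rw [mul_sub_one, ← Circle.coe_mul, ← AddChar.map_add_eq_mul, inner_sub_right]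
    ring_nf
  calc _ = ‖(Real.fourierChar (-⟪x, ξ - η⟫) : ℂ) - 1‖ := by
        rw [factored, norm_mul, Circle.norm_coe, one_mul]
    _ ≤ ‖2 * Real.pi * -⟪x, ξ - η⟫‖ := by
        rw [Real.fourierChar_apply, mul_comm _ Complex.I]
        exact Real.norm_exp_I_mul_ofReal_sub_one_le
    _ = 2 * Real.pi * |⟪x, ξ - η⟫| := by
        rw [norm_mul, norm_neg, Real.norm_of_nonneg Real.two_pi_pos.le, Real.norm_eq_abs]
    _ ≤ 2 * Real.pi * (‖x‖ * ‖ξ - η‖) := by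
        gcongr
        exact abs_real_inner_le_norm x (ξ - η)
    _ = 2 * Real.pi * ‖x‖ * ‖ξ - η‖ := by ring

theorem norm_fourierChar_smul_sub_le {V E : Type*} [NormedAddCommGroup V] [InnerProductSpace ℝ V]
    [NormedAddCommGroup E] [NormedSpace ℂ E] (f : V → E) {R : ℝ} (hR : 0 ≤ R) (ξ η x : V) :
    ‖Real.fourierChar (-⟪x, ξ⟫) • f x - Real.fourierChar (-⟪x, η⟫) • f x‖ ≤
      2 * Real.pi * R * ‖ξ - η‖ * ‖f x‖ +
        (Metric.closedBall 0 R)ᶜ.indicator (fun x ↦ 2 * ‖f x‖) x := by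
  by_cases hx : x ∈ Metric.closedBall 0 R
  · rw [Set.indicator_of_notMem (Set.notMem_compl_iff.2 hx), add_zero]
    calc ‖Real.fourierChar (-⟪x, ξ⟫) • f x - Real.fourierChar (-⟪x, η⟫) • f x‖
        = ‖(Real.fourierChar (-⟪x, ξ⟫) : ℂ) - Real.fourierChar (-⟪x, η⟫)‖ * ‖f x‖ := by
          rw [← norm_smul, sub_smul, Circle.smul_def, Circle.smul_def]
      _ ≤ 2 * Real.pi * ‖x‖ * ‖ξ - η‖ * ‖f x‖ := by
          gcongr
          exact norm_fourierChar_sub_le x ξ η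
      _ ≤ 2 * Real.pi * R * ‖ξ - η‖ * ‖f x‖ := by
          gcongr
          exact mem_closedBall_zero_iff.1 hx
  · rw [Set.indicator_of_mem (Set.mem_compl hx)]
    calc ‖Real.fourierChar (-⟪x, ξ⟫) • f x - Real.fourierChar (-⟪x, η⟫) • f x‖
        ≤ ‖Real.fourierChar (-⟪x, ξ⟫) • f x‖ + ‖Real.fourierChar (-⟪x, η⟫) • f x‖ :=
          norm_sub_le _ _
      _ = 2 * ‖f x‖ := by rw [Circle.norm_smul, Circle.norm_smul, two_mul]
      _ ≤ 2 * Real.pi * R * ‖ξ - η‖ * ‖f x‖ + 2 * ‖f x‖ :=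
          le_add_of_nonneg_left (by positivity)

variable {V : Type*} [NormedAddCommGroup V] [InnerProductSpace ℝ V] [FiniteDimensional ℝ V]
  [MeasurableSpace V] [BorelSpace V]

variable (V) in
theorem fourierTransformCLM_L1_injective :
    Function.Injective (Real.Lp.fourierTransformCLM V ℂ) := by
  refine (injective_iff_map_eq_zero _).2 fun f hf ↦ ?_
  have fourier_f (ξ : V) : 𝓕 (f : V → ℂ) ξ = 0 := DFunLike.congr_fun hf ξ
  refine LinearMap.ker_eq_bot'.1 Lp.ker_toTemperedDistributionCLM_eq_bot f ?_
  ext g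
  have parseval := VectorFourier.integral_fourierIntegral_smul_eq_flip (L := innerₗ V)
    (μ := volume) (ν := volume) Real.continuous_fourierChar continuous_inner
    (L1.integrable_coeFn f) (𝓕⁻ g).integrable
  calc Lp.toTemperedDistribution f g = ∫ x, f x • 𝓕 (𝓕⁻ g) x := by simp [mul_comm]
    _ = ∫ ξ, 𝓕 (f : V → ℂ) ξ • 𝓕⁻ g ξ := by
      rw [flip_innerₗ] at parseval
      exact parseval.symm
    _ = 0 := by simp [fourier_f]

variable {E : Type*} [NormedAddCommGroup E] [NormedSpace ℂ E]

theorem norm_fourier_sub_fourier_le {f : V → E} (hf : Integrable f) {R : ℝ} (hR : 0 ≤ R)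
    (ξ η : V) :
    ‖𝓕 f ξ - 𝓕 f η‖ ≤ 2 * Real.pi * R * ‖ξ - η‖ * (∫ x, ‖f x‖) +
      2 * ∫ x in (Metric.closedBall 0 R)ᶜ, ‖f x‖ := by
  have hB : MeasurableSet (Metric.closedBall (0 : V) R)ᶜ := measurableSet_closedBall.compl
  have integrable_char_smul (ζ : V) : Integrable fun x ↦ Real.fourierChar (-⟪x, ζ⟫) • f x :=
    (Real.fourierIntegral_convergent_iff ζ).2 hf
  have integrable_main : Integrable fun x ↦ 2 * Real.pi * R * ‖ξ - η‖ * ‖f x‖ :=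
    hf.norm.const_mul _
  have integrable_tail :
      Integrable ((Metric.closedBall (0 : V) R)ᶜ.indicator fun x ↦ 2 * ‖f x‖) :=
    (hf.norm.const_mul 2).indicator hB
  rw [Real.fourier_eq, Real.fourier_eq,
    ← integral_sub (integrable_char_smul ξ) (integrable_char_smul η)]
  refine (norm_integral_le_of_norm_le (integrable_main.add integrable_tail)
    (ae_of_all _ (norm_fourierChar_smul_sub_le f hR ξ η))).trans_eq ?_
  rw [integral_add' integrable_main integrable_tail, integral_indicator hB,
    integral_const_mul, integral_const_mul]

theorem equicontinuous_fourier_of_tight {ι : Type*} {f : ι → V → E} (hf : ∀ i, Integrable (f i))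
    {C : ℝ} (hC : ∀ i, ∫ x, ‖f i x‖ ≤ C)
    (htight : ∀ ε > 0, ∃ n : ℕ, ∀ i, ∫ x in (Metric.closedBall 0 (n : ℝ))ᶜ, ‖f i x‖ ≤ ε) :
    Equicontinuous fun i ↦ 𝓕 (f i) := by
  refine fun ξ ↦ Metric.equicontinuousAt_iff_right.2 fun ε hε ↦ ?_
  obtain ⟨n, hn⟩ := htight (ε / 4) (by positivity)
  have modulus_lt : ∀ᶠ η in 𝓝 ξ, 2 * Real.pi * n * ‖ξ - η‖ * C + 2 * (ε / 4) < ε := by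
    have hcont : Continuous fun η ↦ 2 * Real.pi * n * ‖ξ - η‖ * C + 2 * (ε / 4) := by fun_prop
    refine (hcont.tendsto ξ).eventually_lt_const ?_
    rw [sub_self, norm_zero]
    linarith
  filter_upwards [modulus_lt] with η hη i
  rw [dist_eq_norm]
  calc ‖𝓕 (f i) ξ - 𝓕 (f i) η‖ ≤ _ := norm_fourier_sub_fourier_le (hf i) n.cast_nonneg ξ η
    _ ≤ 2 * Real.pi * n * ‖ξ - η‖ * C + 2 * (ε / 4) := by
      gcongr
      exacts [hC i, hn i]
    _ < ε := hη

theorem IsReflexiveSpace.equicontinuous_fourier {W : Type*} [NormedAddCommGroup W]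
    [NormedSpace ℂ W] (hW : IsReflexiveSpace W) (T : W →L[ℂ] (V →₁[volume] ℂ)) :
    Equicontinuous fun y : Metric.closedBall (0 : W) 1 ↦ 𝓕 (T y : V → ℂ) := by
  refine equicontinuous_fourier_of_tight (C := ‖T‖) (fun y ↦ L1.integrable_coeFn (T y))
    (fun y ↦ ?_) fun ε hε ↦ ?_
  · rw [← L1.norm_eq_integral_norm]
    exact T.unit_le_opNorm y (mem_closedBall_zero_iff.1 y.2)
  · obtain ⟨n, hn⟩ := hW.exists_forall_setIntegral_norm_le T
      (s := fun n : ℕ ↦ (Metric.closedBall 0 (n : ℝ))ᶜ) (fun n ↦ measurableSet_closedBall.compl)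
      (fun m n hmn ↦ Set.compl_subset_compl.2 (Metric.closedBall_subset_closedBall (by gcongr)))
      (by rw [← Set.compl_iUnion, Metric.iUnion_closedBall_nat, Set.compl_univ]) hε
    exact ⟨n, fun y ↦ hn y (mem_closedBall_zero_iff.1 y.2)⟩

theorem finiteDimensional_of_reflexive_fourier_subspace_general (Y : Subspace ℂ C₀(V, ℂ))
    (hsub : ∀ F ∈ Y, ∃ f : V → ℂ, Integrable f ∧ ⇑F = 𝓕 f) (hrefl : IsReflexiveSpace Y) :
    FiniteDimensional ℂ Y := by
  have := hrefl.completeSpace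
  obtain ⟨incl, hincl⟩ : ∃ incl : Y →L[ℂ] V →ᵇ ℂ, ∀ F x, incl F x = (F : C₀(V, ℂ)) x :=
    ⟨((zeroAtInftyToBCF ℂ V).comp Y.subtypeₗᵢ).toContinuousLinearMap, fun _ _ ↦ rfl⟩
  have range_incl : Set.range incl ⊆ Set.range (Real.Lp.fourierTransformCLM V ℂ) := by
    rintro _ ⟨F, rfl⟩
    obtain ⟨f, hf, hFf⟩ := hsub F F.2
    refine ⟨(memLp_one_iff_integrable.2 hf).toLp f, BoundedContinuousFunction.ext fun x ↦ ?_⟩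
    rw [hincl, hFf, ← Real.fourierTransform_toLp (memLp_one_iff_integrable.2 hf)]
    rfl
  obtain ⟨T, hT⟩ := exists_continuousLinearMap_lift_of_range_subset (E := Y)
    (fourierTransformCLM_L1_injective V) range_incl
  have fourier_T (F : Y) : 𝓕 (T F : V → ℂ) = (F : C₀(V, ℂ)) := by
    ext x
    rw [← hincl, ← hT]
    rfl
  have hequi := hrefl.equicontinuous_fourier T
  simp only [fourier_T] at hequi
  exact hrefl.finiteDimensional_of_equicontinuous (e := Y.subtypeₗᵢ) hequi

end Fourier

theorem exists_integrable_fourier_eq_fourierTransf {n : ℕ} {f : EuclideanSpace ℝ (Fin n) → ℂ}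
    (hf : Integrable f) :
    ∃ g : EuclideanSpace ℝ (Fin n) → ℂ, Integrable g ∧ 𝓕 g = fourierTransf f := by
  have two_pi_ne : 2 * Real.pi ≠ 0 := by positivity
  have hg : Integrable fun x ↦ f ((2 * Real.pi) • x) :=
    (integrable_comp_smul_iff volume f two_pi_ne).2 hf
  refine ⟨_, hg.smul ((2 * Real.pi) ^ n), ?_⟩
  ext ξ
  let h (x : EuclideanSpace ℝ (Fin n)) : ℂ := Complex.exp (-(Complex.I * (⟪x, ξ⟫ : ℝ))) * f x
  calc _ = (2 * Real.pi) ^ n • ∫ x, h ((2 * Real.pi) • x) := by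
        rw [Real.fourier_eq', ← integral_smul]
        refine integral_congr_ae (ae_of_all _ fun x ↦ ?_)
        simp only [h, Pi.smul_apply, real_inner_smul_left, smul_eq_mul, Complex.real_smul]
        rw [mul_left_comm]
        congr 3
        push_cast
        ring
    _ = ∫ x, h x := by
        rw [Measure.integral_comp_smul, finrank_euclideanSpace_fin,
          abs_of_pos (by positivity), smul_inv_smul₀ (pow_ne_zero n two_pi_ne)]

/-- A reflexive closed subspace of `C₀(ℝⁿ)` consisting of absolutely
convergent Fourier transforms is finite dimensional. -/
theorem finiteDimensional_of_reflexive_fourier_subspace {n : ℕ}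
    (Y : Subspace ℂ C₀(EuclideanSpace ℝ (Fin n), ℂ))
    (hclosed : IsClosed (Y : Set C₀(EuclideanSpace ℝ (Fin n), ℂ)))
    (hsub : ∀ F ∈ Y, ∃ f : EuclideanSpace ℝ (Fin n) → ℂ,
      Integrable f ∧ ∀ ξ, F ξ = fourierTransf f ξ)
    (hrefl : IsReflexiveSpace ↥Y) :
    FiniteDimensional ℂ ↥Y := by
  refine finiteDimensional_of_reflexive_fourier_subspace_general Y (fun F hF ↦ ?_) hrefl
  obtain ⟨f, hf, hFf⟩ := hsub F hF
  obtain ⟨g, hg, hgf⟩ := exists_integrable_fourier_eq_fourierTransf hf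
  exact ⟨g, hg, (funext hFf).trans hgf.symm⟩
end

section
/- Fix q > 1 and a lacunary sequence of integers ξ_1 > 0 with ξ_{m+1} > q ξ_m, extended by ξ_{-m} = -ξ_m. There is a constant C, independent of the finitely supported sequence a : ℤ → ℂ, such that Σ_m |a(m)| ≤ C · sup_{x ∈ [-π,π)} |Σ_m a(m) e^{i ξ_m x}|. -/
/-!
The proof is by duality. If the frequencies `ξ m`, `m ∈ A`, have gaps at least `3`, the Riesz
product `P_c = ∏ (1 + Re (c_m e^{i ξ_m x}))` with `|c_m| ≤ 1` is nonnegative of mean `1`, and its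
coefficients at `ξ m` and `-ξ m` are `c_m / 2` and `conj c_m / 2`. The combination
`½ ∑_{j < 4} i⁻ʲ P_{iʲ c}` still has `L¹` norm at most `2`, but its coefficients at `ξ m`, `-ξ m`
and `0` are `c_m`, `0` and `0`. For large gaps the rest of its spectrum clusters near the `± ξ m`,
away from the other frequencies of the given sum. Pairing it with that sum, with `c_m` the phase of
`a m`, then isolates `∑_{m ∈ A} |a m|`. A lacunary sequence splits into finitely many such sets
`A`: the indices of a fixed sign and a fixed residue modulo a large `r`, where the gaps are `q ^ r`.
The two signs have to be treated separately because `ξ (-m) = -ξ m`.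
-/

open MeasureTheory AddCircle ComplexConjugate
open scoped ComplexOrder

section FourierCoefficients

variable {T : ℝ} [Fact (0 < T)] {ι : Type*}

lemma integrable_haarAddCircle (f : C(AddCircle T, ℂ)) : Integrable f haarAddCircle :=
  f.continuous.integrable_of_hasCompactSupport (HasCompactSupport.of_compactSpace f)

/-- The `n`-th Fourier coefficient as a linear functional on continuous functions. -/
noncomputable def fourierCoeffLM (n : ℤ) : C(AddCircle T, ℂ) →ₗ[ℂ] ℂ where
  toFun f := fourierCoeff f n
  map_add' f g :=
    congrFun (fourierCoeff.add (integrable_haarAddCircle f) (integrable_haarAddCircle g)) n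
  map_smul' c f := fourierCoeff.const_smul f c n

lemma fourierCoeffLM_fourier_mul (k n : ℤ) (f : C(AddCircle T, ℂ)) :
    fourierCoeffLM n (fourier k * f) = fourierCoeffLM (n - k) f := by
  refine integral_congr_ae (.of_forall fun x ↦ ?_)
  simp only [ContinuousMap.mul_apply, smul_eq_mul, ← mul_assoc, ← fourier_add]
  rw [neg_sub, neg_add_eq_sub]

lemma fourierCoeffLM_one (n : ℤ) :
    fourierCoeffLM n (1 : C(AddCircle T, ℂ)) = if n = 0 then 1 else 0 := by
  have h : (1 : C(AddCircle T, ℂ)) = fourier 0 := by ext; simp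
  rw [h, ← Pi.single_apply, ← fourierCoeff_fourier (T := T)]
  rfl

lemma integral_norm_eq_fourierCoeffLM_zero {f : C(AddCircle T, ℂ)} (hf : ∀ x, 0 ≤ f x) :
    ((∫ x, ‖f x‖ ∂haarAddCircle : ℝ) : ℂ) = fourierCoeffLM 0 f := by
  refine integral_ofReal.symm.trans (integral_congr_ae (.of_forall fun x ↦ ?_))
  simp [Complex.norm_of_nonneg' (hf x)]

/-- The trigonometric sum with frequencies `ξ` and finitely supported coefficients `a`, as a
continuous function on the circle. -/
noncomputable def trigSum (T : ℝ) (ξ : ι → ℤ) (a : ι →₀ ℂ) : C(AddCircle T, ℂ) :=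
  ∑ m ∈ a.support, a m • fourier (ξ m)

lemma integral_conj_trigSum_mul (ξ : ι → ℤ) (a : ι →₀ ℂ) (g : C(AddCircle T, ℂ)) :
    ∫ x, conj (trigSum T ξ a x) * g x ∂haarAddCircle
      = ∑ m ∈ a.support, conj (a m) * fourierCoeffLM (ξ m) g := by
  have expand (x : AddCircle T) : conj (trigSum T ξ a x) * g x
      = ∑ m ∈ a.support, conj (a m) * (fourier (-ξ m) x • g x) := by
    simp only [trigSum, ContinuousMap.sum_apply, ContinuousMap.smul_apply, smul_eq_mul, map_sum,
      map_mul, fourier_neg, Finset.sum_mul, mul_assoc]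
  simp_rw [expand]
  rw [integral_finsetSum _ fun m _ ↦ ((integrable_haarAddCircle g).fourier_smul _).const_mul _]
  simp_rw [integral_const_mul]
  rfl

lemma norm_sum_conj_mul_fourierCoeffLM_le (ξ : ι → ℤ) (a : ι →₀ ℂ) (g : C(AddCircle T, ℂ)) :
    ‖∑ m ∈ a.support, conj (a m) * fourierCoeffLM (ξ m) g‖
      ≤ (∫ x, ‖g x‖ ∂haarAddCircle) * ‖trigSum T ξ a‖ := by
  rw [← integral_conj_trigSum_mul, ← integral_mul_const]
  refine norm_integral_le_of_norm_le ((integrable_haarAddCircle g).norm.mul_const _)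
    (.of_forall fun x ↦ ?_)
  rw [norm_mul, RCLike.norm_conj, mul_comm]
  gcongr
  exact ContinuousMap.norm_coe_le_norm _ x

lemma norm_coeff_le_norm_trigSum {ξ : ι → ℤ} (hξ : ξ.Injective) (a : ι →₀ ℂ) (m : ι) :
    ‖a m‖ ≤ ‖trigSum T ξ a‖ := by
  classical
  have h := norm_sum_conj_mul_fourierCoeffLM_le (T := T) ξ a (fourier (ξ m))
  have coeff (p : ι) : fourierCoeffLM (ξ p) (fourier (T := T) (ξ m)) = if p = m then 1 else 0 := by
    rw [← mul_one (fourier _), fourierCoeffLM_fourier_mul, fourierCoeffLM_one]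
    simp only [sub_eq_zero, hξ.eq_iff]
  have mass : ∫ x, ‖fourier (T := T) (ξ m) x‖ ∂haarAddCircle = 1 := by
    simp only [fourier_apply, Circle.norm_coe, integral_const, probReal_univ, smul_eq_mul, mul_one]
  by_cases hm : a m = 0
  · simp [hm]
  · simpa [coeff, mass, hm, -fourier_apply] using h

end FourierCoefficients

section RieszProducts

variable {T : ℝ} {ι : Type*}

/-- The real trigonometric polynomial `1 + Re (z e^{ikx})`, the building block of Riesz products.
It is written in exponentials because only its Fourier coefficients and its sign matter. -/
noncomputable def rieszFactor (T : ℝ) (k : ℤ) (z : ℂ) : C(AddCircle T, ℂ) :=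
  1 + (z / 2) • fourier k + (conj z / 2) • fourier (-k)

lemma rieszFactor_apply (k : ℤ) (z : ℂ) (x : AddCircle T) :
    rieszFactor T k z x = ((1 + (z * fourier k x).re : ℝ) : ℂ) := by
  rw [Complex.ofReal_add, Complex.re_eq_add_conj, map_mul, ← fourier_neg]
  simp only [rieszFactor, ContinuousMap.add_apply, ContinuousMap.one_apply,
    ContinuousMap.smul_apply, smul_eq_mul, Complex.ofReal_one]
  ring

lemma rieszFactor_nonneg (k : ℤ) {z : ℂ} (hz : ‖z‖ ≤ 1) (x : AddCircle T) :
    0 ≤ rieszFactor T k z x := by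
  rw [rieszFactor_apply, Complex.zero_le_real]
  have h := Complex.abs_re_le_norm (z * fourier k x)
  rw [norm_mul, fourier_apply, Circle.norm_coe, mul_one, ← fourier_apply] at h
  linarith [(abs_le.mp (h.trans hz)).1]

lemma rieszFactor_neg_conj (k : ℤ) (z : ℂ) :
    rieszFactor T (-k) (conj z) = rieszFactor T k z := by
  rw [rieszFactor, rieszFactor, neg_neg, Complex.conj_conj, add_right_comm]

/-- The Riesz product `∏ (1 + Re (c_m e^{i ξ_m x}))` over the indices `m ∈ A`. -/
noncomputable def rieszProduct (T : ℝ) (ξ : ι → ℤ) (c : ι → ℂ) (A : Finset ι) :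
    C(AddCircle T, ℂ) :=
  ∏ m ∈ A, rieszFactor T (ξ m) (c m)

variable {ξ : ι → ℤ} {c : ι → ℂ} {A : Finset ι}

lemma rieszProduct_nonneg (hc : ∀ m ∈ A, ‖c m‖ ≤ 1) (x : AddCircle T) :
    0 ≤ rieszProduct T ξ c A x := by
  rw [rieszProduct, ContinuousMap.prod_apply]
  exact Finset.prod_nonneg fun m hm ↦ rieszFactor_nonneg _ (hc m hm) x

lemma rieszProduct_neg_conj :
    rieszProduct T (-ξ) (fun m ↦ conj (c m)) A = rieszProduct T ξ c A :=
  Finset.prod_congr rfl fun m _ ↦ rieszFactor_neg_conj (ξ m) (c m)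

variable [Fact (0 < T)]

lemma fourierCoeffLM_rieszFactor_mul (k : ℤ) (z : ℂ) (f : C(AddCircle T, ℂ)) (n : ℤ) :
    fourierCoeffLM n (rieszFactor T k z * f) = fourierCoeffLM n f
      + z / 2 * fourierCoeffLM (n - k) f + conj z / 2 * fourierCoeffLM (n + k) f := by
  simp only [rieszFactor, add_mul, one_mul, smul_mul_assoc, map_add, map_smul, smul_eq_mul,
    fourierCoeffLM_fourier_mul, sub_neg_eq_add]

lemma fourierCoeffLM_rieszProduct_insert [DecidableEq ι] {k : ι} (hk : k ∉ A) (n : ℤ) :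
    fourierCoeffLM n (rieszProduct T ξ c (insert k A))
      = fourierCoeffLM n (rieszProduct T ξ c A)
        + c k / 2 * fourierCoeffLM (n - ξ k) (rieszProduct T ξ c A)
        + conj (c k) / 2 * fourierCoeffLM (n + ξ k) (rieszProduct T ξ c A) := by
  rw [rieszProduct, Finset.prod_insert hk, fourierCoeffLM_rieszFactor_mul]
  rfl

lemma fourierCoeffLM_rieszProduct_eq_zero_of_sum_abs_lt {n : ℤ} (hn : ∑ m ∈ A, |ξ m| < |n|) :
    fourierCoeffLM n (rieszProduct T ξ c A) = 0 := by
  classical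
  induction A using Finset.induction_on generalizing n with
  | empty => simpa [rieszProduct, fourierCoeffLM_one] using hn
  | insert k A hk ih =>
    rw [Finset.sum_insert hk] at hn
    have hsub : ∑ m ∈ A, |ξ m| < |n - ξ k| := by grind
    have hadd : ∑ m ∈ A, |ξ m| < |n + ξ k| := by grind
    rw [fourierCoeffLM_rieszProduct_insert hk, ih (by grind), ih hsub, ih hadd]
    simp

lemma fourierCoeffLM_rieszProduct_insert_of_sum_abs_lt [DecidableEq ι] {k : ι} (hk : k ∉ A)
    {n : ℤ} (hn : ∑ m ∈ A, |ξ m| < |(|n| - |ξ k|)|) :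
    fourierCoeffLM n (rieszProduct T ξ c (insert k A))
      = fourierCoeffLM n (rieszProduct T ξ c A) := by
  have hsub : ∑ m ∈ A, |ξ m| < |n - ξ k| := by grind
  have hadd : ∑ m ∈ A, |ξ m| < |n + ξ k| := by grind
  rw [fourierCoeffLM_rieszProduct_insert hk,
    fourierCoeffLM_rieszProduct_eq_zero_of_sum_abs_lt hsub,
    fourierCoeffLM_rieszProduct_eq_zero_of_sum_abs_lt hadd]
  simp

/-- Hadamard gaps: of any two frequencies `ξ k`, `ξ m` with distinct indices in `A`, the larger one
is at least `Q` times the smaller one in absolute value. -/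
def HasHadamardGaps (Q : ℝ) (ξ : ι → ℤ) (A : Set ι) : Prop :=
  A.Pairwise fun k m ↦ |ξ k| ≤ |ξ m| → Q * |(ξ k : ℝ)| ≤ |(ξ m : ℝ)|

lemma HasHadamardGaps.mono {Q : ℝ} {A B : Set ι} (hAB : A ⊆ B) (hB : HasHadamardGaps Q ξ B) :
    HasHadamardGaps Q ξ A :=
  Set.Pairwise.mono hAB hB

lemma HasHadamardGaps.mul_sum_abs_le {Q : ℝ} {k : ι} (hA : HasHadamardGaps Q ξ (insert k A))
    (hk : k ∉ A) (hmax : ∀ m ∈ A, |ξ m| ≤ |ξ k|) :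
    (Q - 1) * ∑ m ∈ A, |(ξ m : ℝ)| ≤ |(ξ k : ℝ)| := by
  classical
  induction A using Finset.induction_on_max_value (fun m ↦ |ξ m|) generalizing k with
  | empty => simp
  | insert l B hl hlmax ih =>
    have hB := ih (k := l) (hA.mono (by simp)) hl hlmax
    have hlk : Q * |(ξ l : ℝ)| ≤ |(ξ k : ℝ)| :=
      hA (by simp) (by simp) (by rintro rfl; simp at hk) (hmax l (by simp))
    rw [Finset.sum_insert hl]
    linarith

/-- The frequency `n` keeps off the frequencies `ξ m`, `m ∈ A`, and their negatives: its relative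
distance to each of them exceeds `1 / (Q - 1)`. A Riesz product with Hadamard gaps `Q` has no
spectrum there, except at `0`. -/
def KeepsOff (Q : ℝ) (ξ : ι → ℤ) (A : Set ι) (n : ℤ) : Prop :=
  ∀ m ∈ A, |(ξ m : ℝ)| < (Q - 1) * |(|(n : ℝ)| - |(ξ m : ℝ)|)|

lemma lt_mul_abs_sub_of_ratio {q Q x y : ℝ} (hq : 1 < q) (hqQ : q < (Q - 1) * (q - 1))
    (hy : 0 < y) (h : q * x ≤ y ∨ q * y ≤ x) : y < (Q - 1) * |x - y| := by
  have hQ : 0 < Q - 1 := pos_of_mul_pos_left (by linarith) (by linarith : 0 ≤ q - 1)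
  have hdist : (q - 1) * y ≤ q * |x - y| := by
    rcases h with h | h
    · linarith [mul_le_mul_of_nonneg_left (neg_le_abs (x - y)) (by linarith : 0 ≤ q)]
    · linarith [le_abs_self (x - y), le_mul_of_one_le_left (abs_nonneg (x - y)) hq.le]
  refine lt_of_mul_lt_mul_left ?_ (by linarith : 0 ≤ q)
  calc q * y < (Q - 1) * (q - 1) * y := by gcongr
    _ = (Q - 1) * ((q - 1) * y) := mul_assoc ..
    _ ≤ (Q - 1) * (q * |x - y|) := by gcongr
    _ = q * ((Q - 1) * |x - y|) := mul_left_comm ..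

lemma keepsOff_of_ratio {q Q : ℝ} {n : ℤ} {A : Set ι} (hq : 1 < q) (hqQ : q < (Q - 1) * (q - 1))
    (hξ : ∀ m ∈ A, ξ m ≠ 0)
    (hn : ∀ m ∈ A, q * |(n : ℝ)| ≤ |(ξ m : ℝ)| ∨ q * |(ξ m : ℝ)| ≤ |(n : ℝ)|) :
    KeepsOff Q ξ A n := fun m hm ↦
  lt_mul_abs_sub_of_ratio hq hqQ (abs_pos.mpr (Int.cast_ne_zero.mpr (hξ m hm))) (hn m hm)

lemma HasHadamardGaps.sum_abs_lt {Q : ℝ} {k : ι} {n : ℤ} (hQ : 1 < Q)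
    (hA : HasHadamardGaps Q ξ (insert k A)) (hk : k ∉ A) (hmax : ∀ m ∈ A, |ξ m| ≤ |ξ k|)
    (hn : |(ξ k : ℝ)| < (Q - 1) * |(|(n : ℝ)| - |(ξ k : ℝ)|)|) :
    ∑ m ∈ A, |ξ m| < |(|n| - |ξ k|)| := by
  have h := lt_of_mul_lt_mul_left ((hA.mul_sum_abs_le hk hmax).trans_lt hn) (by linarith)
  exact_mod_cast h

lemma HasHadamardGaps.fourierCoeffLM_rieszProduct_of_keepsOff {Q : ℝ} {n : ℤ} (hQ : 1 < Q)
    (hA : HasHadamardGaps Q ξ A) (hn : KeepsOff Q ξ A n) :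
    fourierCoeffLM n (rieszProduct T ξ c A) = if n = 0 then 1 else 0 := by
  classical
  induction A using Finset.induction_on_max_value (fun m ↦ |ξ m|) with
  | empty => simp [rieszProduct, fourierCoeffLM_one]
  | insert k A hk hmax ih =>
    rw [Finset.coe_insert] at hA
    have hnk := hA.sum_abs_lt hQ hk hmax (hn k (by simp))
    rw [fourierCoeffLM_rieszProduct_insert_of_sum_abs_lt hk hnk,
      ih (hA.mono (by simp)) fun m hm ↦ hn m (by simp_all)]

lemma HasHadamardGaps.fourierCoeffLM_zero_rieszProduct {Q : ℝ} (hQ : 3 ≤ Q)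
    (hA : HasHadamardGaps Q ξ A) (hξ : ∀ m ∈ A, ξ m ≠ 0) :
    fourierCoeffLM 0 (rieszProduct T ξ c A) = 1 := by
  have hoff : KeepsOff Q ξ A 0 :=
    keepsOff_of_ratio (q := Q) (by linarith) (by nlinarith) hξ (by simp)
  rw [hA.fourierCoeffLM_rieszProduct_of_keepsOff (by linarith) hoff, if_pos rfl]

lemma HasHadamardGaps.fourierCoeffLM_rieszProduct_self {Q : ℝ} (hQ : 3 ≤ Q)
    (hA : HasHadamardGaps Q ξ A) (hξ : ∀ m ∈ A, ξ m ≠ 0) {m : ι} (hm : m ∈ A) :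
    fourierCoeffLM (ξ m) (rieszProduct T ξ c A) = c m / 2 := by
  classical
  have hQ1 : 1 < Q := by linarith
  have hQQ : Q < (Q - 1) * (Q - 1) := by nlinarith
  induction A using Finset.induction_on_max_value (fun m ↦ |ξ m|) with
  | empty => simp at hm
  | insert k A hk hmax ih =>
    rw [Finset.coe_insert] at hA
    have hA' : HasHadamardGaps Q ξ A := hA.mono (Set.subset_insert k A)
    have hξA : ∀ p ∈ A, ξ p ≠ 0 := fun p hp ↦ hξ p (Finset.mem_insert_of_mem hp)
    have hξk : 0 < |(ξ k : ℝ)| := abs_pos.mpr (Int.cast_ne_zero.mpr (hξ k (by simp)))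
    have off (n : ℤ) (hn : Q * |(n : ℝ)| ≤ |(ξ k : ℝ)|) : ∑ m ∈ A, |ξ m| < |(|n| - |ξ k|)| :=
      hA.sum_abs_lt hQ1 hk hmax (lt_mul_abs_sub_of_ratio hQ1 hQQ hξk (.inl hn))
    rcases Finset.mem_insert.mp hm with rfl | hmA
    · have hsum : ∑ p ∈ A, |ξ p| < |ξ m| := by simpa using off 0 (by simp)
      have hsum_double : ∑ p ∈ A, |ξ p| < |ξ m + ξ m| := by
        rw [← two_mul, abs_mul, abs_two]
        linarith [abs_nonneg (ξ m)]
      rw [fourierCoeffLM_rieszProduct_insert hk, sub_self,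
        hA'.fourierCoeffLM_zero_rieszProduct hQ hξA,
        fourierCoeffLM_rieszProduct_eq_zero_of_sum_abs_lt hsum,
        fourierCoeffLM_rieszProduct_eq_zero_of_sum_abs_lt hsum_double]
      ring
    · have hmk := hA (Set.mem_insert_of_mem k hmA) (Set.mem_insert k A)
        (ne_of_mem_of_not_mem hmA hk) (hmax m hmA)
      rw [fourierCoeffLM_rieszProduct_insert_of_sum_abs_lt hk (off (ξ m) hmk), ih hA' hξA hmA]

lemma HasHadamardGaps.fourierCoeffLM_rieszProduct_neg {Q : ℝ} (hQ : 3 ≤ Q)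
    (hA : HasHadamardGaps Q ξ A) (hξ : ∀ m ∈ A, ξ m ≠ 0) {m : ι} (hm : m ∈ A) :
    fourierCoeffLM (-ξ m) (rieszProduct T ξ c A) = conj (c m) / 2 := by
  have hneg : HasHadamardGaps Q (-ξ) A := by simpa [HasHadamardGaps] using hA
  rw [← rieszProduct_neg_conj]
  exact hneg.fourierCoeffLM_rieszProduct_self hQ (by simpa using hξ) hm

/-- The average `½ ∑_{j < 4} i⁻ʲ P_{iʲ c}` of rotated Riesz products. Averaging over the fourth
roots of unity removes the constant term and the negative frequencies from `P_c`. -/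
noncomputable def rotatedRieszSum (T : ℝ) (ξ : ι → ℤ) (c : ι → ℂ) (A : Finset ι) :
    C(AddCircle T, ℂ) :=
  (1 / 2 : ℂ) • ∑ j ∈ Finset.range 4,
    (-Complex.I) ^ j • rieszProduct T ξ (fun m ↦ Complex.I ^ j * c m) A

lemma fourierCoeffLM_rotatedRieszSum (n : ℤ) :
    fourierCoeffLM n (rotatedRieszSum T ξ c A) = 1 / 2 * ∑ j ∈ Finset.range 4,
      (-Complex.I) ^ j * fourierCoeffLM n (rieszProduct T ξ (fun m ↦ Complex.I ^ j * c m) A) := by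
  simp only [rotatedRieszSum, map_smul, map_sum, smul_eq_mul]

lemma HasHadamardGaps.fourierCoeffLM_rotatedRieszSum_of_keepsOff {Q : ℝ} {n : ℤ} (hQ : 1 < Q)
    (hA : HasHadamardGaps Q ξ A) (hn : KeepsOff Q ξ A n) :
    fourierCoeffLM n (rotatedRieszSum T ξ c A) = 0 := by
  simp only [fourierCoeffLM_rotatedRieszSum, hA.fourierCoeffLM_rieszProduct_of_keepsOff hQ hn,
    Finset.sum_range_succ, Finset.sum_range_zero]
  grind [Complex.I_sq]

lemma HasHadamardGaps.fourierCoeffLM_rotatedRieszSum_self {Q : ℝ} (hQ : 3 ≤ Q)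
    (hA : HasHadamardGaps Q ξ A) (hξ : ∀ m ∈ A, ξ m ≠ 0) {m : ι} (hm : m ∈ A) :
    fourierCoeffLM (ξ m) (rotatedRieszSum T ξ c A) = c m := by
  simp only [fourierCoeffLM_rotatedRieszSum, hA.fourierCoeffLM_rieszProduct_self hQ hξ hm,
    Finset.sum_range_succ, Finset.sum_range_zero]
  grind [Complex.I_sq]

lemma HasHadamardGaps.fourierCoeffLM_rotatedRieszSum_neg {Q : ℝ} (hQ : 3 ≤ Q)
    (hA : HasHadamardGaps Q ξ A) (hξ : ∀ m ∈ A, ξ m ≠ 0) {m : ι} (hm : m ∈ A) :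
    fourierCoeffLM (-ξ m) (rotatedRieszSum T ξ c A) = 0 := by
  simp only [fourierCoeffLM_rotatedRieszSum, hA.fourierCoeffLM_rieszProduct_neg hQ hξ hm,
    Finset.sum_range_succ, Finset.sum_range_zero, map_mul, map_pow, Complex.conj_I]
  grind [Complex.I_sq]

lemma HasHadamardGaps.integral_norm_rieszProduct {Q : ℝ} (hQ : 3 ≤ Q)
    (hA : HasHadamardGaps Q ξ A) (hξ : ∀ m ∈ A, ξ m ≠ 0) (hc : ∀ m ∈ A, ‖c m‖ ≤ 1) :
    ∫ x, ‖rieszProduct T ξ c A x‖ ∂haarAddCircle = 1 := by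
  have h := integral_norm_eq_fourierCoeffLM_zero (T := T) (rieszProduct_nonneg (ξ := ξ) hc)
  rw [hA.fourierCoeffLM_zero_rieszProduct hQ hξ] at h
  exact_mod_cast h

lemma HasHadamardGaps.integral_norm_rotatedRieszSum_le {Q : ℝ} (hQ : 3 ≤ Q)
    (hA : HasHadamardGaps Q ξ A) (hξ : ∀ m ∈ A, ξ m ≠ 0) (hc : ∀ m ∈ A, ‖c m‖ ≤ 1) :
    ∫ x, ‖rotatedRieszSum T ξ c A x‖ ∂haarAddCircle ≤ 2 := by
  set P : ℕ → C(AddCircle T, ℂ) := fun j ↦ rieszProduct T ξ (fun m ↦ Complex.I ^ j * c m) A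
  have hP (j : ℕ) : ∫ x, ‖P j x‖ ∂haarAddCircle = 1 :=
    hA.integral_norm_rieszProduct hQ hξ fun m hm ↦ by simpa using hc m hm
  have hint (j : ℕ) : Integrable (fun x ↦ ‖P j x‖) haarAddCircle :=
    (integrable_haarAddCircle (P j)).norm
  have hle (x : AddCircle T) :
      ‖rotatedRieszSum T ξ c A x‖ ≤ 1 / 2 * ∑ j ∈ Finset.range 4, ‖P j x‖ := by
    have hnorm (j : ℕ) : ‖((-Complex.I) ^ j • P j) x‖ = ‖P j x‖ := by
      rw [ContinuousMap.smul_apply, norm_smul, norm_pow, norm_neg, Complex.norm_I, one_pow, one_mul]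
    rw [rotatedRieszSum, ContinuousMap.smul_apply, norm_smul, ContinuousMap.sum_apply,
      show ‖(1 / 2 : ℂ)‖ = 1 / 2 by norm_num]
    gcongr
    exact norm_sum_le_of_le _ fun j _ ↦ (hnorm j).le
  calc ∫ x, ‖rotatedRieszSum T ξ c A x‖ ∂haarAddCircle
      ≤ ∫ x, 1 / 2 * ∑ j ∈ Finset.range 4, ‖P j x‖ ∂haarAddCircle :=
        integral_mono (integrable_haarAddCircle _).norm
          ((integrable_finsetSum _ fun j _ ↦ hint j).const_mul _) hle
    _ = 2 := by
        rw [integral_const_mul, integral_finsetSum _ fun j _ ↦ hint j]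
        simp only [hP, Finset.sum_const, Finset.card_range]
        norm_num

lemma HasHadamardGaps.sum_norm_le {Q : ℝ} (hQ : 3 ≤ Q) (hA : HasHadamardGaps Q ξ A)
    (hξ : ∀ m ∈ A, ξ m ≠ 0) (a : ι →₀ ℂ) (hAa : A ⊆ a.support)
    (hoff : ∀ p ∉ A, (∃ m ∈ A, ξ p = -ξ m) ∨ KeepsOff Q ξ A (ξ p)) :
    ∑ m ∈ A, ‖a m‖ ≤ 2 * ‖trigSum T ξ a‖ := by
  set phase : ι → ℂ := fun m ↦ a m / ‖a m‖
  set g := rotatedRieszSum T ξ phase A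
  have hphase (m : ι) : ‖phase m‖ ≤ 1 := by
    simpa [phase] using div_self_le_one ‖a m‖
  have hmul (m : ι) : conj (a m) * phase m = ‖a m‖ := by
    rcases eq_or_ne (a m) 0 with h | h
    · simp [h]
    · rw [← mul_div_assoc, Complex.conj_mul', sq, mul_div_cancel_right₀]
      exact_mod_cast norm_ne_zero_iff.mpr h
  have hself (m : ι) (hm : m ∈ A) : conj (a m) * fourierCoeffLM (ξ m) g = ‖a m‖ := by
    rw [hA.fourierCoeffLM_rotatedRieszSum_self hQ hξ hm, hmul]
  have hzero (p : ι) (hp : p ∉ A) : fourierCoeffLM (ξ p) g = 0 := by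
    rcases hoff p hp with ⟨m, hm, hpm⟩ | hpoff
    · rw [hpm, hA.fourierCoeffLM_rotatedRieszSum_neg hQ hξ hm]
    · exact hA.fourierCoeffLM_rotatedRieszSum_of_keepsOff (by linarith) hpoff
  have hpairing : ∑ m ∈ a.support, conj (a m) * fourierCoeffLM (ξ m) g
      = ((∑ m ∈ A, ‖a m‖ : ℝ) : ℂ) := by
    rw [← Finset.sum_subset hAa fun p _ hp ↦ by rw [hzero p hp, mul_zero],
      Finset.sum_congr rfl hself, Complex.ofReal_sum]
  calc ∑ m ∈ A, ‖a m‖ = ‖∑ m ∈ a.support, conj (a m) * fourierCoeffLM (ξ m) g‖ := by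
        rw [hpairing, Complex.norm_of_nonneg (Finset.sum_nonneg fun m _ ↦ norm_nonneg _)]
    _ ≤ (∫ x, ‖g x‖ ∂haarAddCircle) * ‖trigSum T ξ a‖ :=
        norm_sum_conj_mul_fourierCoeffLM_le ξ a g
    _ ≤ 2 * ‖trigSum T ξ a‖ := by
        gcongr
        exact hA.integral_norm_rotatedRieszSum_le hQ hξ fun m _ ↦ hphase m

end RieszProducts

section Lacunary

/-- A lacunary sequence of positive integers with ratio greater than `q > 1`, indexed by the
positive integers and extended to `ℤ` as an odd function. -/
structure IsOddLacunary (q : ℝ) (ξ : ℤ → ℤ) : Prop where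
  one_lt : 1 < q
  pos : 0 < ξ 1
  mul_lt : ∀ m : ℤ, 1 ≤ m → q * (ξ m : ℝ) < (ξ (m + 1) : ℝ)
  odd : ξ.Odd

namespace IsOddLacunary

variable {q : ℝ} {ξ : ℤ → ℤ}

lemma pos_of_pos (h : IsOddLacunary q ξ) {m : ℤ} (hm : 0 < m) : 0 < ξ m := by
  induction m, (hm : 1 ≤ m) using Int.leInduction with
  | base => exact h.pos
  | succ m hm ih =>
    have hξm : (0 : ℝ) < ξ m := Int.cast_pos.mpr ih
    exact_mod_cast (mul_pos (one_pos.trans h.one_lt) hξm).trans (h.mul_lt m hm)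

lemma abs_apply_natAbs (h : IsOddLacunary q ξ) (m : ℤ) : |ξ m.natAbs| = |ξ m| := by
  rcases m.natAbs_eq with hm | hm
  · rw [← hm]
  · rw [← abs_neg, ← h.odd, ← hm]

lemma apply_ne_zero (h : IsOddLacunary q ξ) {m : ℤ} (hm : m ≠ 0) : ξ m ≠ 0 := by
  rw [← abs_pos, ← h.abs_apply_natAbs]
  exact abs_pos.mpr (h.pos_of_pos (by omega)).ne'

lemma mul_abs_le_succ (h : IsOddLacunary q ξ) (n : ℕ) :
    q * |(ξ n : ℝ)| ≤ |(ξ (n + 1 : ℕ) : ℝ)| := by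
  rcases n.eq_zero_or_pos with rfl | hn
  · simp [h.odd.map_zero]
  · have hξn : (0 : ℝ) < ξ n := Int.cast_pos.mpr (h.pos_of_pos (by omega))
    rw [abs_of_pos hξn]
    exact (h.mul_lt n (by omega)).le.trans (le_abs_self _)

lemma pow_mul_abs_le (h : IsOddLacunary q ξ) {m p : ℤ} {d : ℕ} (hd : m.natAbs + d ≤ p.natAbs) :
    q ^ d * |(ξ m : ℝ)| ≤ |(ξ p : ℝ)| := by
  obtain ⟨e, he⟩ := Nat.exists_eq_add_of_le hd
  have hgeom := geom_le (u := fun j ↦ |(ξ (m.natAbs + j : ℕ) : ℝ)|) (c := q)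
    (by linarith [h.one_lt]) (d + e) fun j _ ↦ h.mul_abs_le_succ (m.natAbs + j)
  rw [← add_assoc, ← he, add_zero, ← Int.cast_abs, ← Int.cast_abs, h.abs_apply_natAbs,
    h.abs_apply_natAbs, Int.cast_abs, Int.cast_abs] at hgeom
  refine le_trans ?_ hgeom
  gcongr
  · exact h.one_lt.le
  · omega

lemma mul_abs_le (h : IsOddLacunary q ξ) {m p : ℤ} (hmp : m.natAbs < p.natAbs) :
    q * |(ξ m : ℝ)| ≤ |(ξ p : ℝ)| := by
  simpa using h.pow_mul_abs_le (d := 1) hmp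

lemma abs_lt_abs (h : IsOddLacunary q ξ) {m p : ℤ} (hmp : m.natAbs < p.natAbs) :
    |ξ m| < |ξ p| := by
  have hp : (0 : ℝ) < |(ξ p : ℝ)| :=
    abs_pos.mpr (Int.cast_ne_zero.mpr (h.apply_ne_zero (by omega)))
  have hle := h.mul_abs_le hmp
  have hlt : |(ξ m : ℝ)| < |(ξ p : ℝ)| := by
    nlinarith [h.one_lt, abs_nonneg (ξ m : ℝ)]
  exact_mod_cast hlt

lemma natAbs_eq_of_abs_eq (h : IsOddLacunary q ξ) {m p : ℤ} (hmp : |ξ m| = |ξ p|) :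
    m.natAbs = p.natAbs := by
  by_contra hne
  rcases Nat.lt_or_gt_of_ne hne with hlt | hlt
  · exact (h.abs_lt_abs hlt).ne hmp
  · exact (h.abs_lt_abs hlt).ne' hmp

lemma injective (h : IsOddLacunary q ξ) : ξ.Injective := by
  intro m p hmp
  rcases Int.natAbs_eq_natAbs_iff.mp (h.natAbs_eq_of_abs_eq (congrArg abs hmp)) with hm | rfl
  · exact hm
  · by_contra hne
    rw [h.odd] at hmp
    exact h.apply_ne_zero (m := p) (by omega) (by omega)

end IsOddLacunary

/-- The class of an index: its sign and its residue modulo `r`. Indices of one class are spaced by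
at least `r`, which turns gaps `q` into gaps `q ^ r`. -/
noncomputable def indexClass (r : ℕ) (m : ℤ) : SignType × ZMod r := (SignType.sign m, m)

lemma natAbs_add_le_of_indexClass_eq {r : ℕ} {k m : ℤ} (hkm : indexClass r k = indexClass r m)
    (hlt : k.natAbs < m.natAbs) : k.natAbs + r ≤ m.natAbs := by
  obtain ⟨hsign, hmod⟩ := Prod.mk.inj hkm
  have hdvd : r ∣ (m - k).natAbs :=
    Int.natCast_dvd.mp ((ZMod.intCast_eq_intCast_iff_dvd_sub k m r).mp hmod)
  have hr := Nat.le_of_dvd (by omega) hdvd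
  rcases lt_trichotomy m 0 with hm | rfl | hm
  · rw [sign_neg hm, sign_eq_neg_one_iff] at hsign
    omega
  · simp at hlt
  · rw [sign_pos hm, sign_eq_one_iff] at hsign
    omega

lemma eq_of_indexClass_eq_of_natAbs_eq {r : ℕ} {k m : ℤ} (hkm : indexClass r k = indexClass r m)
    (habs : k.natAbs = m.natAbs) : k = m := by
  have hsign : SignType.sign k = SignType.sign m := congrArg Prod.fst hkm
  rw [← sign_mul_abs k, ← sign_mul_abs m, hsign, Int.abs_eq_natAbs, Int.abs_eq_natAbs, habs]

lemma IsOddLacunary.hasHadamardGaps {q : ℝ} {ξ : ℤ → ℤ} (h : IsOddLacunary q ξ) (r : ℕ)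
    (s : SignType × ZMod r) : HasHadamardGaps (q ^ r) ξ {m | indexClass r m = s} := by
  rintro k hk m rfl hkm hle
  have hlt : k.natAbs < m.natAbs := by
    refine lt_of_le_of_ne (not_lt.mp fun hgt ↦ (h.abs_lt_abs hgt).not_ge hle) fun heq ↦ ?_
    exact hkm (eq_of_indexClass_eq_of_natAbs_eq hk heq)
  exact h.pow_mul_abs_le (natAbs_add_le_of_indexClass_eq hk hlt)

lemma IsOddLacunary.eq_neg_or_keepsOff {q Q : ℝ} {ξ : ℤ → ℤ} (h : IsOddLacunary q ξ)
    (hqQ : q < (Q - 1) * (q - 1)) {A : Finset ℤ} (hA : ∀ m ∈ A, m ≠ 0) {p : ℤ} (hp : p ∉ A) :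
    (∃ m ∈ A, ξ p = -ξ m) ∨ KeepsOff Q ξ A (ξ p) := by
  by_cases hpA : ∃ m ∈ A, p.natAbs = m.natAbs
  · obtain ⟨m, hm, hpm⟩ := hpA
    have hneg : p = -m := (Int.natAbs_eq_natAbs_iff.mp hpm).resolve_left (by grind)
    exact .inl ⟨m, hm, by rw [hneg, h.odd]⟩
  · refine .inr (keepsOff_of_ratio h.one_lt hqQ (fun m hm ↦ h.apply_ne_zero (hA m hm)) ?_)
    intro m hm
    have hne : p.natAbs ≠ m.natAbs := fun heq ↦ hpA ⟨m, hm, heq⟩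
    exact hne.lt_or_gt.imp h.mul_abs_le h.mul_abs_le

lemma IsOddLacunary.sum_indexClass_norm_le {q : ℝ} {ξ : ℤ → ℤ} {T : ℝ} [Fact (0 < T)] {r : ℕ}
    (h : IsOddLacunary q ξ) (hr : 3 ≤ q ^ r) (hqr : q < (q ^ r - 1) * (q - 1)) (a : ℤ →₀ ℂ)
    (s : SignType × ZMod r) :
    ∑ m ∈ a.support with indexClass r m = s, ‖a m‖ ≤ 2 * ‖trigSum T ξ a‖ := by
  set A := a.support.filter fun m ↦ indexClass r m = s
  have hclass : ∀ m ∈ A, indexClass r m = s := fun m hm ↦ (Finset.mem_filter.mp hm).2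
  by_cases hA : 0 ∈ A
  · have hsub : A ⊆ {0} := fun m hm ↦ by
      have hm0 : SignType.sign m = SignType.sign 0 :=
        congrArg Prod.fst ((hclass m hm).trans (hclass 0 hA).symm)
      simpa using hm0
    calc ∑ m ∈ A, ‖a m‖ ≤ ∑ m ∈ {0}, ‖a m‖ :=
          Finset.sum_le_sum_of_subset_of_nonneg hsub fun _ _ _ ↦ norm_nonneg _
      _ = ‖a 0‖ := Finset.sum_singleton ..
      _ ≤ ‖trigSum T ξ a‖ := norm_coeff_le_norm_trigSum h.injective a 0
      _ ≤ 2 * ‖trigSum T ξ a‖ := le_mul_of_one_le_left (norm_nonneg _) one_le_two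
  · have hne : ∀ m ∈ A, m ≠ 0 := fun m hm ↦ ne_of_mem_of_not_mem hm hA
    exact ((h.hasHadamardGaps r s).mono hclass).sum_norm_le hr
      (fun m hm ↦ h.apply_ne_zero (hne m hm)) a (Finset.filter_subset _ _)
      fun p hp ↦ h.eq_neg_or_keepsOff hqr hne hp

lemma exists_pow_ge_and_lt {q : ℝ} (hq : 1 < q) :
    ∃ r : ℕ, 3 ≤ q ^ r ∧ q < (q ^ r - 1) * (q - 1) := by
  have hq' : 0 < q - 1 := sub_pos.mpr hq
  obtain ⟨r, hr⟩ := pow_unbounded_of_one_lt (3 + q / (q - 1)) hq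
  have hdiv : 0 < q / (q - 1) := by positivity
  exact ⟨r, by linarith, (div_lt_iff₀ hq').mp (by linarith)⟩

lemma IsOddLacunary.exists_sum_norm_le {q : ℝ} {ξ : ℤ → ℤ} (h : IsOddLacunary q ξ) (T : ℝ)
    [Fact (0 < T)] :
    ∃ C > (0 : ℝ), ∀ a : ℤ →₀ ℂ, ∑ m ∈ a.support, ‖a m‖ ≤ C * ‖trigSum T ξ a‖ := by
  obtain ⟨r, hr, hqr⟩ := exists_pow_ge_and_lt h.one_lt
  have : NeZero r := ⟨by rintro rfl; norm_num at hr⟩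
  refine ⟨Fintype.card (SignType × ZMod r) * 2, by positivity, fun a ↦ ?_⟩
  calc ∑ m ∈ a.support, ‖a m‖
      = ∑ s, ∑ m ∈ a.support with indexClass r m = s, ‖a m‖ :=
        (Finset.sum_fiberwise _ _ _).symm
    _ ≤ Fintype.card (SignType × ZMod r) • (2 * ‖trigSum T ξ a‖) :=
        Finset.sum_le_card_nsmul _ _ _ fun s _ ↦ h.sum_indexClass_norm_le hr hqr a s
    _ = Fintype.card (SignType × ZMod r) * 2 * ‖trigSum T ξ a‖ := by
        rw [nsmul_eq_mul, mul_assoc]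

end Lacunary

lemma norm_eq_iSup_Ico {T : ℝ} [Fact (0 < T)] (t : ℝ) (f : C(AddCircle T, ℂ)) :
    ‖f‖ = ⨆ x : Set.Ico t (t + T), ‖f (x : ℝ)‖ := by
  rw [ContinuousMap.norm_eq_iSup_norm, ← (equivIco T t).symm.iSup_comp]
  rfl

lemma trigSum_two_pi_apply {ι : Type*} (ξ : ι → ℤ) (a : ι →₀ ℂ) (x : ℝ) :
    trigSum (2 * Real.pi) ξ a x
      = ∑ m ∈ a.support, a m * Complex.exp (Complex.I * (ξ m : ℂ) * (x : ℂ)) := by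
  simp only [trigSum, ContinuousMap.sum_apply, ContinuousMap.smul_apply, smul_eq_mul]
  refine Finset.sum_congr rfl fun m _ ↦ ?_
  rw [fourier_coe_apply]
  congr 2
  push_cast
  field_simp

instance fact_two_pi_pos : Fact (0 < 2 * Real.pi) := ⟨Real.two_pi_pos⟩

lemma norm_trigSum_two_pi {ι : Type*} (ξ : ι → ℤ) (a : ι →₀ ℂ) :
    ‖trigSum (2 * Real.pi) ξ a‖ = ⨆ x : Set.Ico (-Real.pi) Real.pi,
      ‖∑ m ∈ a.support, a m * Complex.exp (Complex.I * (ξ m : ℂ) * ((x : ℝ) : ℂ))‖ := by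
  have hpi : -Real.pi + 2 * Real.pi = Real.pi := by ring
  have h := norm_eq_iSup_Ico (-Real.pi) (trigSum (2 * Real.pi) ξ a)
  rw [hpi] at h
  simpa only [trigSum_two_pi_apply] using h

/-- Sidon-type estimate for lacunary trigonometric sums: for a lacunary
sequence of integer frequencies `ξ` with ratio `q > 1`, the `ℓ¹` norm of the
coefficients is controlled by the sup norm of the trigonometric sum. -/
theorem lacunary_sidon_estimate {q : ℝ} (hq : 1 < q) (ξ : ℤ → ℤ)
    (hpos : 0 < ξ 1)
    (hlac : ∀ m : ℤ, 1 ≤ m → q * (ξ m : ℝ) < (ξ (m + 1) : ℝ))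
    (hodd : ∀ m : ℤ, ξ (-m) = -ξ m) :
    ∃ C > (0 : ℝ), ∀ a : ℤ →₀ ℂ,
      (∑ m ∈ a.support, ‖a m‖) ≤
        C * ⨆ x : Set.Ico (-Real.pi) Real.pi,
          ‖∑ m ∈ a.support, a m * Complex.exp (Complex.I * (ξ m : ℂ) * ((x : ℝ) : ℂ))‖ := by
  have hξ : IsOddLacunary q ξ := ⟨hq, hpos, hlac, hodd⟩
  obtain ⟨C, hC, hbound⟩ := hξ.exists_sum_norm_le (2 * Real.pi)
  refine ⟨C, hC, fun a ↦ ?_⟩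
  rw [← norm_trigSum_two_pi]
  exact hbound a
end
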